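/- arXiv:2211.14678 — 4 statements merged into one kernel-verified Lean document; each statement's English description precedes it below -/
import Mathlib

section
/- For every integer k ≥ 1, h(k) ≤ (3/2)·k + 4, where h(k) is the diameter of the graph G_k on the permutations of [k] whose edges are prefix and suffix reversals. -/
/-- `π` and `τ` are related by a prefix reversal: there is `t ≤ k` such that the first `t`
entries are reversed and the remaining entries agree (0-indexed form of the paper's
1-indexed definition). -/
def PrefixRev (k : ℕ) (π τ : Equiv.Perm (Fin k)) : Prop :=
  ∃ t : ℕ, ∃ ht : t ≤ k,
    (∀ i : Fin k, t ≤ (i : ℕ) → π i = τ i) ∧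
    (∀ i : Fin k, ∀ hi : (i : ℕ) < t, π i = τ ⟨t - 1 - (i : ℕ), by omega⟩)

/-- `π` and `τ` are related by a suffix reversal: there is `t` such that the entries at
positions `< t` agree and the remaining entries are reversed. -/
def SuffixRev (k : ℕ) (π τ : Equiv.Perm (Fin k)) : Prop :=
  ∃ t : ℕ,
    (∀ i : Fin k, (i : ℕ) < t → π i = τ i) ∧
    (∀ i : Fin k, ∀ hi : t ≤ (i : ℕ), π i = τ ⟨k - 1 - (i : ℕ) + t, by
      have := i.isLt; omega⟩)

/-- The pancake graph `P_k`, whose edges are prefix reversals. -/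
def pancakeGraph (k : ℕ) : SimpleGraph (Equiv.Perm (Fin k)) :=
  SimpleGraph.fromRel (PrefixRev k)

/-- The graph `G_k`, whose edges are prefix and suffix reversals. -/
def prefixSuffixGraph (k : ℕ) : SimpleGraph (Equiv.Perm (Fin k)) :=
  SimpleGraph.fromRel (fun π τ => PrefixRev k π τ ∨ SuffixRev k π τ)

/-- The values of `π` at positions `p` and `q` differ by `1`, or are `{1, k}`
(1-indexed), i.e. `{0, k - 1}` in this 0-indexed formalization. -/
def PiAdjacency (k : ℕ) (π : Equiv.Perm (Fin k)) (p q : Fin k) : Prop :=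
  (((π p : ℕ) : ℤ) - ((π q : ℕ) : ℤ)).natAbs = 1 ∨
    ({(π p : ℕ), (π q : ℕ)} : Set ℕ) = {0, k - 1}

/-- Positions `i` and `i + 1` (0-indexed) form a `π`-adjacency. -/
def PosAdjacency (k : ℕ) (π : Equiv.Perm (Fin k)) (i : ℕ) : Prop :=
  ∃ h : i + 1 < k, PiAdjacency k π ⟨i, by omega⟩ ⟨i + 1, h⟩

/-- The equivalence relation `∼_π`: `a ∼_π b` iff every pair of consecutive positions
between the position of `a` and the position of `b` is a `π`-adjacency. -/
def Sim (k : ℕ) (π : Equiv.Perm (Fin k)) (a b : Fin k) : Prop :=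
  ∀ i : ℕ, min ((π.symm a : ℕ)) ((π.symm b : ℕ)) ≤ i →
    i < max ((π.symm a : ℕ)) ((π.symm b : ℕ)) → PosAdjacency k π i

/-- `∼_π` has exactly one equivalence class on `[k]`. -/
def OneClass (k : ℕ) (π : Equiv.Perm (Fin k)) : Prop :=
  ∀ a b : Fin k, Sim k π a b

/-- The pairing `φ(j) = j + o_j`, swapping `2i - 1 ↔ 2i` (1-indexed),
i.e. `2i ↔ 2i + 1` (0-indexed). -/
def partner (d : ℕ) (j : Fin (2 * d)) : Fin (2 * d) :=
  ⟨if (j : ℕ) % 2 = 0 then (j : ℕ) + 1 else (j : ℕ) - 1, by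
    have := j.isLt; split <;> omega⟩

/-- The equivalence relation `≈_π`. -/
def ApproxSim (d : ℕ) (π : Equiv.Perm (Fin (2 * d))) (a b : Fin (2 * d)) : Prop :=
  a = b ∨ (Sim (2 * d) π a b ∧ Sim (2 * d) π a (partner d a) ∧
    Sim (2 * d) π b (partner d b))

/-- `j` is free, i.e. `{j}` is an equivalence class (a singleton) of `≈_π`. -/
def IsFree (d : ℕ) (π : Equiv.Perm (Fin (2 * d))) (j : Fin (2 * d)) : Prop :=
  ∀ j' : Fin (2 * d), ApproxSim d π j j' → j' = j

/-- The `≈_π`-equivalence class of `j`, as a finite set. -/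
noncomputable def classOf (d : ℕ) (π : Equiv.Perm (Fin (2 * d))) (j : Fin (2 * d)) :
    Finset (Fin (2 * d)) :=
  @Finset.filter _ (fun j' => ApproxSim d π j j') (Classical.decPred _) Finset.univ

/-- `S(π)`, the number of singletons of `π`. -/
noncomputable def numSingletons (d : ℕ) (π : Equiv.Perm (Fin (2 * d))) : ℕ :=
  (@Finset.filter _ (fun j => IsFree d π j) (Classical.decPred _) Finset.univ).card

/-- `B(π)`, the number of blocks (equivalence classes of `≈_π` of size `> 1`) of `π`. -/
noncomputable def numBlocks (d : ℕ) (π : Equiv.Perm (Fin (2 * d))) : ℕ :=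
  ((Finset.univ.image (classOf d π)).filter (fun C => 1 < C.card)).card

/-- The potential function `ν(π) = (3/2) S(π) + 2 B(π)`. -/
noncomputable def nu (d : ℕ) (π : Equiv.Perm (Fin (2 * d))) : ℚ :=
  3 / 2 * (numSingletons d π : ℚ) + 2 * (numBlocks d π : ℚ)

/-- The unique element of `[k]` congruent to `j - o_j` modulo `k` (0-indexed form). -/
def prevVal (d : ℕ) (j : Fin (2 * d)) : Fin (2 * d) :=
  ⟨if (j : ℕ) % 2 = 0 then ((j : ℕ) + 2 * d - 1) % (2 * d) else ((j : ℕ) + 1) % (2 * d), by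
    have := j.isLt; split <;> exact Nat.mod_lt _ (by omega)⟩

/-!
Cut the target word into consecutive pairs (plus one leftover letter if its length is odd), read it
cyclically and up to reversal, and regard the source word as a sequence of blocks, at first the
single letters. A move may split the source only between blocks. Give each pair of the target whose
letters are still separate weight `3` and each assembled block weight `2`.

Let `A` be the first block of the source. After rotating and possibly reversing the target, either
`A` is the first letter of a separate pair `x y`, and one prefix reversal joins `x` to `y` (weight
`3` becomes `2`), or `A` is an assembled block whose right neighbour in the target is a block of
weight `2`, which can be glued to `A` in at most two moves, or a separate pair of weight `3`, which
can be glued to `A` in three moves. So each move is paid for by a unit of weight. The process ends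
with a single block of weight `2`, which takes at most three more moves to rotate and reflect into
the target. Since the initial weight of a word of length `k` is at most `(3k + 1) / 2`, this uses at
most `(3k + 1) / 2 - 2 + 3` moves.
-/

/-- `m` arises from the word `l` by reversing a prefix or a suffix. -/
def EndReversal {α : Type*} (l m : List α) : Prop :=
  ∃ u v : List α, l = u ++ v ∧ (m = u.reverse ++ v ∨ m = u ++ v.reverse)

namespace EndReversal

/-! ### Distances between words -/

section Graph

variable {V : Type*}

theorem edist_le_add_of_le {G : SimpleGraph V} {u v w : V} {m n : ℕ∞}
    (huv : G.edist u v ≤ m) (hvw : G.edist v w ≤ n) : G.edist u w ≤ m + n :=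
  SimpleGraph.edist_triangle.trans (add_le_add huv hvw)

theorem edist_fromRel_le_one {r : V → V → Prop} {u v : V} (h : r u v) :
    (SimpleGraph.fromRel r).edist u v ≤ 1 := by
  rw [SimpleGraph.edist_le_one_iff_adj_or_eq, SimpleGraph.fromRel_adj]
  tauto

end Graph

variable {α : Type*}

theorem perm {l m : List α} (h : EndReversal l m) : l.Perm m := by
  obtain ⟨u, v, rfl, rfl | rfl⟩ := h
  · exact u.reverse_perm.symm.append_right v
  · exact v.reverse_perm.symm.append_left u

/-- The graph on all words over `α` whose edges are prefix and suffix reversals. Unlike in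
`prefixSuffixGraph`, letters may repeat, so that words can be cut and concatenated freely. -/
def wordGraph (α : Type*) : SimpleGraph (List α) :=
  SimpleGraph.fromRel EndReversal

theorem perm_of_wordGraph_adj {l m : List α} (h : (wordGraph α).Adj l m) : l.Perm m :=
  ((SimpleGraph.fromRel_adj _ _ _).1 h).2.elim EndReversal.perm fun h' => h'.perm.symm

theorem edist_reverse_append_le_one (u v : List α) :
    (wordGraph α).edist (u ++ v) (u.reverse ++ v) ≤ 1 :=
  edist_fromRel_le_one ⟨u, v, rfl, Or.inl rfl⟩

theorem edist_append_reverse_le_one (u v : List α) :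
    (wordGraph α).edist (u ++ v) (u ++ v.reverse) ≤ 1 :=
  edist_fromRel_le_one ⟨u, v, rfl, Or.inr rfl⟩

theorem edist_join_le_one (a p b q : List α) :
    (wordGraph α).edist (a ++ p ++ b ++ q) (p.reverse ++ (a.reverse ++ b) ++ q) ≤ 1 := by
  simpa using edist_reverse_append_le_one (a ++ p) (b ++ q)

theorem edist_join_reverse_le_two (a p b q : List α) :
    (wordGraph α).edist (a ++ p ++ b.reverse ++ q) (q ++ p.reverse ++ (a.reverse ++ b)) ≤ 2 := by
  have reverse_suffix : (wordGraph α).edist (a ++ p ++ b.reverse ++ q)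
      (a ++ p ++ q.reverse ++ b) ≤ 1 := by
    simpa using edist_append_reverse_le_one (a ++ p) (b.reverse ++ q)
  have reverse_prefix : (wordGraph α).edist (a ++ p ++ q.reverse ++ b)
      (q ++ p.reverse ++ (a.reverse ++ b)) ≤ 1 := by
    simpa using edist_reverse_append_le_one (a ++ p ++ q.reverse) b
  simpa only [one_add_one_eq_two] using edist_le_add_of_le reverse_suffix reverse_prefix

theorem edist_join_pair_le_three (a p r q : List α) (b c : α) :
    (wordGraph α).edist (a ++ p ++ [b] ++ r ++ [c] ++ q)
      (p.reverse ++ (a.reverse ++ [b, c]) ++ q ++ r.reverse) ≤ 3 := by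
  have join_b : (wordGraph α).edist (a ++ p ++ [b] ++ r ++ [c] ++ q)
      (p.reverse ++ a.reverse ++ [b] ++ r ++ [c] ++ q) ≤ 1 := by
    simpa using edist_reverse_append_le_one (a ++ p) ([b] ++ r ++ [c] ++ q)
  have move_c_last : (wordGraph α).edist (p.reverse ++ a.reverse ++ [b] ++ r ++ [c] ++ q)
      (p.reverse ++ a.reverse ++ [b] ++ r ++ q.reverse ++ [c]) ≤ 1 := by
    simpa using edist_append_reverse_le_one (p.reverse ++ a.reverse ++ [b] ++ r) ([c] ++ q)
  have join_c : (wordGraph α).edist (p.reverse ++ a.reverse ++ [b] ++ r ++ q.reverse ++ [c])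
      (p.reverse ++ (a.reverse ++ [b, c]) ++ q ++ r.reverse) ≤ 1 := by
    simpa using edist_append_reverse_le_one (p.reverse ++ a.reverse ++ [b]) (r ++ q.reverse ++ [c])
  exact edist_le_add_of_le (edist_le_add_of_le join_b move_c_last) join_c

theorem edist_join_swapped_pair_le_three (a p r q : List α) (b c : α) :
    (wordGraph α).edist (a ++ p ++ [c] ++ r ++ [b] ++ q)
      (q ++ p.reverse ++ (a.reverse ++ [b, c]) ++ r) ≤ 3 := by
  have move_c_last : (wordGraph α).edist (a ++ p ++ [c] ++ r ++ [b] ++ q)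
      (a ++ p ++ q.reverse ++ [b] ++ r.reverse ++ [c]) ≤ 1 := by
    simpa using edist_append_reverse_le_one (a ++ p) ([c] ++ r ++ [b] ++ q)
  have join_c : (wordGraph α).edist (a ++ p ++ q.reverse ++ [b] ++ r.reverse ++ [c])
      (a ++ p ++ q.reverse ++ [b, c] ++ r) ≤ 1 := by
    simpa using edist_append_reverse_le_one (a ++ p ++ q.reverse ++ [b]) (r.reverse ++ [c])
  have join_a : (wordGraph α).edist (a ++ p ++ q.reverse ++ [b, c] ++ r)
      (q ++ p.reverse ++ (a.reverse ++ [b, c]) ++ r) ≤ 1 := by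
    simpa using edist_reverse_append_le_one (a ++ p ++ q.reverse) ([b, c] ++ r)
  exact edist_le_add_of_le (edist_le_add_of_le move_c_last join_c) join_a

/-- Two words agree up to rotation and reversal, i.e. up to the action of the dihedral group on
positions. -/
def DihedralEquiv (l m : List α) : Prop :=
  l ~r m ∨ l ~r m.reverse

theorem DihedralEquiv.trans {l m n : List α} (hlm : DihedralEquiv l m) (hmn : DihedralEquiv m n) :
    DihedralEquiv l n := by
  rcases hlm with hlm | hlm <;> rcases hmn with hmn | hmn
  · exact Or.inl (hlm.trans hmn)
  · exact Or.inr (hlm.trans hmn)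
  · exact Or.inr (hlm.trans hmn.reverse)
  · exact Or.inl (hlm.trans (by simpa using hmn.reverse))

theorem exists_append_of_isRotated {l m : List α} (h : l ~r m) :
    ∃ u v : List α, l = u ++ v ∧ m = v ++ u := by
  obtain ⟨n, hn, rfl⟩ := List.isRotated_iff_mod.1 h
  exact ⟨l.take n, l.drop n, by simp, List.rotate_eq_drop_append_take hn⟩

theorem edist_append_comm_reverse_le_two (u v : List α) :
    (wordGraph α).edist (u ++ v) (v ++ u).reverse ≤ 2 := by
  have h := edist_le_add_of_le (edist_reverse_append_le_one u v)
    (edist_append_reverse_le_one u.reverse v)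
  simpa only [one_add_one_eq_two, List.reverse_append] using h

theorem DihedralEquiv.edist_le_three {l m : List α} (h : DihedralEquiv l m) :
    (wordGraph α).edist l m ≤ 3 := by
  rcases h with h | h
  · obtain ⟨u, v, rfl, rfl⟩ := exists_append_of_isRotated h
    have reverse_all : (wordGraph α).edist (v ++ u).reverse (v ++ u) ≤ 1 := by
      simpa using edist_reverse_append_le_one (v ++ u).reverse []
    exact edist_le_add_of_le (edist_append_comm_reverse_le_two u v) reverse_all
  · obtain ⟨u, v, rfl, huv⟩ := exists_append_of_isRotated h
    rw [← List.reverse_reverse m, huv]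
    exact (edist_append_comm_reverse_le_two u v).trans (by norm_num)

/-! ### Blocks up to reversal -/

/-- The word `l` up to reversal. -/
def unoriented (l : List α) : Sym2 (List α) :=
  s(l, l.reverse)

theorem unoriented_reverse (l : List α) : unoriented l.reverse = unoriented l := by
  simp [unoriented, Sym2.eq_swap]

theorem unoriented_eq_iff {l m : List α} :
    unoriented l = unoriented m ↔ l = m ∨ l = m.reverse := by
  rw [unoriented, unoriented, Sym2.eq_iff, List.reverse_inj, List.reverse_eq_iff]
  tauto

/-- The blocks of a subdivided word, up to their order and orientation. -/
def unorientedBlocks (W : List (List α)) : Multiset (Sym2 (List α)) :=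
  W.map unoriented

/-- The subdivision of the reversed word that a subdivision of a word induces. -/
def reverseBlocks (W : List (List α)) : List (List α) :=
  (W.map List.reverse).reverse

@[simp]
theorem flatten_reverseBlocks (W : List (List α)) :
    (reverseBlocks W).flatten = W.flatten.reverse := by
  simp [reverseBlocks, List.reverse_flatten]

@[simp]
theorem unorientedBlocks_nil : unorientedBlocks ([] : List (List α)) = 0 := rfl

@[simp]
theorem unorientedBlocks_cons (l : List α) (W : List (List α)) :
    unorientedBlocks (l :: W) = unoriented l ::ₘ unorientedBlocks W := rfl

@[simp]
theorem unorientedBlocks_append (V W : List (List α)) :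
    unorientedBlocks (V ++ W) = unorientedBlocks V + unorientedBlocks W := by
  simp [unorientedBlocks]

@[simp]
theorem unorientedBlocks_reverseBlocks (W : List (List α)) :
    unorientedBlocks (reverseBlocks W) = unorientedBlocks W := by
  simp [unorientedBlocks, reverseBlocks, Function.comp_def, unoriented_reverse]

@[simp]
theorem unorientedBlocks_eq_zero {W : List (List α)} : unorientedBlocks W = 0 ↔ W = [] := by
  simp [unorientedBlocks]

theorem mem_unorientedBlocks {W : List (List α)} {B : List α} :
    unoriented B ∈ unorientedBlocks W ↔ ∃ l ∈ W, B = l ∨ B = l.reverse := by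
  simp [unorientedBlocks, ← unoriented_eq_iff, eq_comm]

theorem exists_append_cons_of_unorientedBlocks_eq_cons {W : List (List α)} {B : List α}
    {R : Multiset (Sym2 (List α))} (h : unorientedBlocks W = unoriented B ::ₘ R) :
    ∃ P Q, (W = P ++ B :: Q ∨ W = P ++ B.reverse :: Q) ∧
      unorientedBlocks P + unorientedBlocks Q = R := by
  obtain ⟨l, hl, hlB⟩ := mem_unorientedBlocks.1 (h ▸ Multiset.mem_cons_self _ _)
  obtain ⟨P, Q, rfl⟩ := List.append_of_mem hl
  rw [unorientedBlocks_append, unorientedBlocks_cons, ← unoriented_eq_iff.2 hlB,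
    Multiset.add_cons, Multiset.cons_inj_right] at h
  exact ⟨P, Q, by rcases hlB with rfl | rfl <;> simp, h⟩

theorem exists_append_cons_of_unorientedBlocks_eq_singleton_cons {W : List (List α)} {x : α}
    {R : Multiset (Sym2 (List α))} (h : unorientedBlocks W = unoriented [x] ::ₘ R) :
    ∃ P Q, W = P ++ [x] :: Q ∧ unorientedBlocks P + unorientedBlocks Q = R := by
  simpa using exists_append_cons_of_unorientedBlocks_eq_cons h

/-! ### Targets -/

/-- A segment of the target word: either an assembled block, or a pair of letters that are still to
be joined. -/
inductive TargetGroup (α : Type*)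
  | block (l : List α) : TargetGroup α
  | pair (x y : α) : TargetGroup α

namespace TargetGroup

/-- The blocks of the source word out of which the segment has to be assembled. -/
def parts : TargetGroup α → List (List α)
  | block l => [l]
  | pair x y => [[x], [y]]

/-- The segment of the target word. -/
def word (g : TargetGroup α) : List α :=
  g.parts.flatten

/-- The segment of the reversed target word. -/
def reverse : TargetGroup α → TargetGroup α
  | block l => block l.reverse
  | pair x y => pair y x

/-- The number of moves that the segment pays for. -/
def weight : TargetGroup α → ℕ
  | block _ => 2
  | pair _ _ => 3

@[simp]
theorem parts_reverse (g : TargetGroup α) : g.reverse.parts = reverseBlocks g.parts := by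
  cases g <;> rfl

@[simp]
theorem weight_reverse (g : TargetGroup α) : g.reverse.weight = g.weight := by
  cases g <;> rfl

end TargetGroup

open TargetGroup

/-- The blocks of the source word out of which the target has to be assembled. -/
def targetParts (G : List (TargetGroup α)) : List (List α) :=
  G.flatMap parts

/-- The word that a subdivided target spells. -/
def targetWord (G : List (TargetGroup α)) : List α :=
  (targetParts G).flatten

/-- The potential function that pays for the moves. -/
def targetWeight (G : List (TargetGroup α)) : ℕ :=
  (G.map weight).sum

/-- The subdivision of the reversed target word. -/
def reverseTarget (G : List (TargetGroup α)) : List (TargetGroup α) :=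
  (G.map TargetGroup.reverse).reverse

@[simp]
theorem targetParts_cons (g : TargetGroup α) (G : List (TargetGroup α)) :
    targetParts (g :: G) = g.parts ++ targetParts G := rfl

@[simp]
theorem targetParts_append (G H : List (TargetGroup α)) :
    targetParts (G ++ H) = targetParts G ++ targetParts H :=
  List.flatMap_append

theorem targetWord_cons (g : TargetGroup α) (G : List (TargetGroup α)) :
    targetWord (g :: G) = g.word ++ targetWord G := by
  simp [targetWord, word]

@[simp]
theorem targetWeight_cons (g : TargetGroup α) (G : List (TargetGroup α)) :
    targetWeight (g :: G) = g.weight + targetWeight G :=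
  List.sum_cons

theorem targetParts_reverseTarget (G : List (TargetGroup α)) :
    targetParts (reverseTarget G) = reverseBlocks (targetParts G) := by
  induction G with
  | nil => rfl
  | cons g G ih => simp_all [reverseTarget, reverseBlocks, targetParts]

theorem targetWeight_reverseTarget (G : List (TargetGroup α)) :
    targetWeight (reverseTarget G) = targetWeight G := by
  simp [targetWeight, reverseTarget, Function.comp_def]

/-- `G` and `H` pose the same problem up to rotation and reversal of the target word. -/
structure TargetEquiv (G H : List (TargetGroup α)) : Prop where
  word : DihedralEquiv (targetWord G) (targetWord H)
  blocks : unorientedBlocks (targetParts G) = unorientedBlocks (targetParts H)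
  weight : targetWeight G = targetWeight H

theorem TargetEquiv.trans {G H K : List (TargetGroup α)} (hGH : TargetEquiv G H)
    (hHK : TargetEquiv H K) : TargetEquiv G K :=
  ⟨hGH.word.trans hHK.word, hGH.blocks.trans hHK.blocks, hGH.weight.trans hHK.weight⟩

theorem targetEquiv_append_comm (G H : List (TargetGroup α)) : TargetEquiv (G ++ H) (H ++ G) where
  word := Or.inl (by simpa [targetWord] using List.isRotated_append)
  blocks := by simp [add_comm]
  weight := by simp [targetWeight, add_comm]

theorem targetEquiv_reverseTarget (G : List (TargetGroup α)) : TargetEquiv (reverseTarget G) G where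
  word := Or.inr (by simp [targetWord, targetParts_reverseTarget, List.IsRotated.refl])
  blocks := by simp [targetParts_reverseTarget]
  weight := targetWeight_reverseTarget G

theorem exists_targetEquiv_cons_of_mem {G : List (TargetGroup α)} {g : TargetGroup α}
    (h : g ∈ G) : ∃ H, TargetEquiv (g :: H) G := by
  obtain ⟨s, t, rfl⟩ := List.append_of_mem h
  exact ⟨t ++ s, targetEquiv_append_comm (g :: t) s⟩

theorem exists_targetEquiv_reverse_cons_of_mem {G : List (TargetGroup α)} {g : TargetGroup α}
    (h : g ∈ G) : ∃ H, TargetEquiv (g.reverse :: H) G := by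
  have h_reverse : g.reverse ∈ reverseTarget G :=
    List.mem_reverse.2 (List.mem_map_of_mem h)
  obtain ⟨H, hH⟩ := exists_targetEquiv_cons_of_mem h_reverse
  exact ⟨H, hH.trans (targetEquiv_reverseTarget G)⟩

-- The orientation `A.reverse` is the one in which a prefix reversal leaves the first block `A`.
theorem exists_targetEquiv_cons_of_mem_unorientedBlocks {G : List (TargetGroup α)} {A : List α}
    (h : unoriented A ∈ unorientedBlocks (targetParts G)) :
    ∃ H, TargetEquiv (block A.reverse :: H) G ∨
      ∃ x y, A = [x] ∧ TargetEquiv (pair x y :: H) G := by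
  obtain ⟨l, hl, hlA⟩ := mem_unorientedBlocks.1 h
  obtain ⟨g, hg, hlg⟩ := List.mem_flatMap.1 hl
  obtain ⟨H, hH⟩ := exists_targetEquiv_cons_of_mem hg
  obtain ⟨H', hH'⟩ := exists_targetEquiv_reverse_cons_of_mem hg
  cases g with
  | block B =>
    obtain rfl : l = B := by simpa [parts] using hlg
    rcases hlA with rfl | rfl
    · exact ⟨H', Or.inl hH'⟩
    · exact ⟨H, Or.inl (by simpa using hH)⟩
  | pair x y =>
    have hlxy : l = [x] ∨ l = [y] := by simpa [parts] using hlg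
    rcases hlxy with rfl | rfl
    · exact ⟨H, Or.inr ⟨x, y, by simpa using hlA, hH⟩⟩
    · exact ⟨H', Or.inr ⟨y, x, by simpa using hlA, hH'⟩⟩

/-! ### Assembling the target -/

theorem exists_join_block (A B : List α) {W : List (List α)} {R : Multiset (Sym2 (List α))}
    (h : unorientedBlocks W = unoriented B ::ₘ R) :
    ∃ W', unorientedBlocks W' = unoriented (A.reverse ++ B) ::ₘ R ∧
      (wordGraph α).edist (A ++ W.flatten) W'.flatten ≤ 2 := by
  obtain ⟨P, Q, rfl | rfl, rfl⟩ := exists_append_cons_of_unorientedBlocks_eq_cons h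
  · refine ⟨reverseBlocks P ++ (A.reverse ++ B) :: Q, by simp, ?_⟩
    exact le_trans (by simpa using edist_join_le_one A P.flatten B Q.flatten) one_le_two
  · refine ⟨Q ++ reverseBlocks P ++ [A.reverse ++ B], ?_, ?_⟩
    · simp [← Multiset.singleton_add, add_comm, add_left_comm, add_assoc]
    · simpa using edist_join_reverse_le_two A P.flatten B Q.flatten

theorem exists_join_letter (x y : α) {W : List (List α)} {R : Multiset (Sym2 (List α))}
    (h : unorientedBlocks W = unoriented [y] ::ₘ R) :
    ∃ W', unorientedBlocks W' = unoriented [x, y] ::ₘ R ∧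
      (wordGraph α).edist ([x] ++ W.flatten) W'.flatten ≤ 1 := by
  obtain ⟨P, Q, rfl, rfl⟩ := exists_append_cons_of_unorientedBlocks_eq_singleton_cons h
  refine ⟨reverseBlocks P ++ [x, y] :: Q, by simp, ?_⟩
  simpa using edist_join_le_one [x] P.flatten [y] Q.flatten

theorem exists_join_pair (A : List α) (b c : α) {W : List (List α)}
    {R : Multiset (Sym2 (List α))}
    (h : unorientedBlocks W = unoriented [b] ::ₘ unoriented [c] ::ₘ R) :
    ∃ W', unorientedBlocks W' = unoriented (A.reverse ++ [b, c]) ::ₘ R ∧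
      (wordGraph α).edist (A ++ W.flatten) W'.flatten ≤ 3 := by
  obtain ⟨P, Q, rfl, hPQ⟩ := exists_append_cons_of_unorientedBlocks_eq_singleton_cons h
  have hc : unoriented [c] ∈ unorientedBlocks P + unorientedBlocks Q :=
    hPQ ▸ Multiset.mem_cons_self _ _
  rcases Multiset.mem_add.1 hc with hcP | hcQ
  · obtain ⟨R', hR'⟩ := Multiset.exists_cons_of_mem hcP
    obtain rfl : R' + unorientedBlocks Q = R := by simpa [hR'] using hPQ
    obtain ⟨P, S, rfl, rfl⟩ := exists_append_cons_of_unorientedBlocks_eq_singleton_cons hR'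
    refine ⟨Q ++ reverseBlocks P ++ (A.reverse ++ [b, c]) :: S, by simp [add_comm], ?_⟩
    simpa using edist_join_swapped_pair_le_three A P.flatten S.flatten Q.flatten b c
  · obtain ⟨R', hR'⟩ := Multiset.exists_cons_of_mem hcQ
    obtain rfl : unorientedBlocks P + R' = R := by simpa [hR'] using hPQ
    obtain ⟨S, Q, rfl, rfl⟩ := exists_append_cons_of_unorientedBlocks_eq_singleton_cons hR'
    refine ⟨reverseBlocks P ++ (A.reverse ++ [b, c]) :: (Q ++ reverseBlocks S),
      by simp [add_comm], ?_⟩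
    simpa using edist_join_pair_le_three A P.flatten S.flatten Q.flatten b c

theorem exists_join_group (A : List α) (g : TargetGroup α) {W : List (List α)}
    {R : Multiset (Sym2 (List α))} (h : unorientedBlocks W = unorientedBlocks g.parts + R) :
    ∃ W', unorientedBlocks W' = unoriented (A.reverse ++ g.word) ::ₘ R ∧
      (wordGraph α).edist (A ++ W.flatten) W'.flatten ≤ g.weight := by
  cases g with
  | block B => simpa [word, parts, weight] using exists_join_block A B (by simpa [parts] using h)
  | pair b c => simpa [word, parts, weight] using exists_join_pair A b c (by simpa [parts] using h)

/-- Some rotation or reflection of the target word can be reached from `s` in at most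
`targetWeight G - 2` moves. -/
def SolvableFrom (G : List (TargetGroup α)) (s : List α) : Prop :=
  ∃ t, DihedralEquiv t (targetWord G) ∧ (wordGraph α).edist s t + 2 ≤ targetWeight G

theorem SolvableFrom.of_targetEquiv {G H : List (TargetGroup α)} {s : List α}
    (h : SolvableFrom G s) (hGH : TargetEquiv G H) : SolvableFrom H s := by
  obtain ⟨t, ht, hst⟩ := h
  exact ⟨t, ht.trans hGH.word, hGH.weight ▸ hst⟩

theorem SolvableFrom.of_edist_le {G H : List (TargetGroup α)} {s s' : List α} {n : ℕ}
    (h : SolvableFrom G s') (hword : targetWord G = targetWord H)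
    (hweight : n + targetWeight G = targetWeight H) (hs : (wordGraph α).edist s s' ≤ n) :
    SolvableFrom H s := by
  obtain ⟨t, ht, hst⟩ := h
  refine ⟨t, hword ▸ ht, ?_⟩
  calc (wordGraph α).edist s t + 2
      ≤ n + (wordGraph α).edist s' t + 2 := by gcongr; exact edist_le_add_of_le hs le_rfl
    _ = n + ((wordGraph α).edist s' t + 2) := add_assoc _ _ _
    _ ≤ n + targetWeight G := by gcongr
    _ = targetWeight H := mod_cast hweight

theorem solvableFrom_singleton_block (A : List α) : SolvableFrom [block A.reverse] A :=
  ⟨A, Or.inr (by simp [targetWord, targetParts, parts, List.IsRotated.refl]),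
    by simp [targetWeight, weight]⟩

theorem solvableFrom_flatten {G : List (TargetGroup α)} {W : List (List α)} (hG : G ≠ [])
    (h : unorientedBlocks W = unorientedBlocks (targetParts G)) : SolvableFrom G W.flatten := by
  induction hn : targetWeight G using Nat.strong_induction_on generalizing G W with
  | _ n ih =>
  subst hn
  cases W with
  | nil =>
    obtain ⟨g, H, rfl⟩ := List.exists_cons_of_ne_nil hG
    cases g <;> simp [parts] at h
  | cons A W =>
  have hA : unoriented A ∈ unorientedBlocks (targetParts G) := by simp [← h]
  obtain ⟨H, hH | ⟨x, y, rfl, hH⟩⟩ := exists_targetEquiv_cons_of_mem_unorientedBlocks hA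
  · refine SolvableFrom.of_targetEquiv ?_ hH
    have hW : unorientedBlocks W = unorientedBlocks (targetParts H) := by
      simpa [parts, unoriented_reverse] using h.trans hH.blocks.symm
    cases H with
    | nil =>
      obtain rfl : W = [] := by simpa [targetParts] using hW
      simpa using solvableFrom_singleton_block A
    | cons g H =>
      obtain ⟨W', hW', hdist⟩ := exists_join_group A g (by simpa using hW)
      have solvable : SolvableFrom (block (A.reverse ++ g.word) :: H) W'.flatten := by
        refine ih _ ?_ (by simp) (by simp [parts, hW']) rfl
        cases g <;> simp [← hH.weight, weight]
      refine solvable.of_edist_le ?_ ?_ hdist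
      · simp [targetWord_cons, word, parts]
      · simp [weight, add_left_comm]
  · refine SolvableFrom.of_targetEquiv ?_ hH
    have hW : unorientedBlocks W = unoriented [y] ::ₘ unorientedBlocks (targetParts H) := by
      simpa [parts] using h.trans hH.blocks.symm
    obtain ⟨W', hW', hdist⟩ := exists_join_letter x y hW
    have solvable : SolvableFrom (block [x, y] :: H) W'.flatten :=
      ih _ (by simp [← hH.weight, weight]) (by simp) (by simp [parts, hW']) rfl
    refine solvable.of_edist_le (n := 1) ?_ ?_ hdist
    · simp [targetWord_cons, word, parts]
    · simp only [targetWeight_cons, weight]; omega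

/-- The initial subdivision of the target. A leftover letter counts as an assembled block. -/
def pairUp : List α → List (TargetGroup α)
  | [] => []
  | [x] => [block [x]]
  | x :: y :: l => pair x y :: pairUp l

theorem targetParts_pairUp : ∀ l : List α, targetParts (pairUp l) = l.map fun x => [x]
  | [] => rfl
  | [_] => rfl
  | x :: y :: l => by simp [pairUp, parts, targetParts_pairUp l]

theorem targetWord_pairUp (l : List α) : targetWord (pairUp l) = l := by
  rw [targetWord, targetParts_pairUp, ← List.flatMap_def, List.flatMap_singleton']

theorem two_mul_targetWeight_pairUp_le :
    ∀ l : List α, 2 * targetWeight (pairUp l) ≤ 3 * l.length + 1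
  | [] => by simp [pairUp, targetWeight]
  | [_] => by simp [pairUp, targetWeight, weight]
  | _ :: _ :: l => by
    have := two_mul_targetWeight_pairUp_le l
    simp only [pairUp, targetWeight_cons, weight, List.length_cons]
    omega

theorem solvableFrom_pairUp {a b : List α} (hb : b ≠ []) (h : a.Perm b) :
    SolvableFrom (pairUp b) a := by
  have h_ne_nil : pairUp b ≠ [] := by
    intro h_nil
    exact hb (by rw [← targetWord_pairUp b, h_nil]; rfl)
  have h_blocks : unorientedBlocks (a.map fun x => [x]) =
      unorientedBlocks (targetParts (pairUp b)) := by
    rw [targetParts_pairUp]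
    exact Multiset.coe_eq_coe.2 ((h.map _).map _)
  simpa [← List.flatMap_def] using solvableFrom_flatten h_ne_nil h_blocks

theorem edist_wordGraph_le_of_perm {a b : List α} (h : a.Perm b) :
    (wordGraph α).edist a b ≤ ((3 * b.length + 3) / 2 : ℕ) := by
  rcases eq_or_ne b [] with rfl | hb
  · simp [h.eq_nil]
  obtain ⟨t, ht, hat⟩ := solvableFrom_pairUp hb h
  rw [targetWord_pairUp] at ht
  have h_cancel : (wordGraph α).edist a b + 2 ≤ (targetWeight (pairUp b) + 1 : ℕ) + 2 :=
    calc (wordGraph α).edist a b + 2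
        ≤ (wordGraph α).edist a t + 3 + 2 := by
          gcongr; exact edist_le_add_of_le le_rfl ht.edist_le_three
      _ = (wordGraph α).edist a t + 2 + 3 := add_right_comm _ _ _
      _ ≤ targetWeight (pairUp b) + 3 := by gcongr
      _ = (targetWeight (pairUp b) + 1 : ℕ) + 2 := by norm_cast
  have h_weight := two_mul_targetWeight_pairUp_le b
  calc (wordGraph α).edist a b
      ≤ (targetWeight (pairUp b) + 1 : ℕ) :=
        (ENat.add_le_add_iff_right (ENat.ofNat_ne_top 2)).1 h_cancel
    _ ≤ ((3 * b.length + 3) / 2 : ℕ) := by norm_cast; omega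

/-! ### Permutations as words -/

section Perm

variable {k : ℕ} {π τ : Equiv.Perm (Fin k)}

theorem ofFn_perm_ofFn (π τ : Equiv.Perm (Fin k)) : (List.ofFn π).Perm (List.ofFn τ) :=
  (π.ofFn_comp_perm id).trans (τ.ofFn_comp_perm id).symm

theorem exists_ofFn_eq_of_perm {l : List (Fin k)} (h : l.Perm (List.ofFn π)) :
    ∃ τ : Equiv.Perm (Fin k), List.ofFn τ = l := by
  have h_length : l.length = k := by simpa using h.length_eq
  have h_nodup : l.Nodup := h.nodup_iff.2 (List.nodup_ofFn.2 π.injective)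
  have h_injective : Function.Injective fun i : Fin k => l.get (i.cast h_length.symm) :=
    (List.nodup_iff_injective_get.1 h_nodup).comp (Fin.cast_injective _)
  refine ⟨Equiv.ofBijective _ (Finite.injective_iff_bijective.1 h_injective), ?_⟩
  exact List.ext_getElem (by simpa using h_length.symm) (by simp)

theorem prefixRev_of_ofFn_eq {u v : List (Fin k)} (hπ : List.ofFn π = u ++ v)
    (hτ : List.ofFn τ = u.reverse ++ v) : PrefixRev k τ π := by
  have h_length : u.length + v.length = k := by simpa using congrArg List.length hπ.symm
  have hπ_apply (i : Fin k) : π i = (u ++ v)[(i : ℕ)]'(by simp [h_length]) := by simp [← hπ]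
  have hτ_apply (i : Fin k) : τ i = (u.reverse ++ v)[(i : ℕ)]'(by simp [h_length]) := by simp [← hτ]
  refine ⟨u.length, by omega, fun i hi => ?_, fun i hi => ?_⟩
  · simp [hπ_apply, hτ_apply, List.getElem_append_right, hi]
  · rw [hπ_apply, hτ_apply, List.getElem_append_left (by simpa using hi),
      List.getElem_append_left (by simp only; omega), List.getElem_reverse]

theorem suffixRev_of_ofFn_eq {u v : List (Fin k)} (hπ : List.ofFn π = u ++ v)
    (hτ : List.ofFn τ = u ++ v.reverse) : SuffixRev k τ π := by
  have h_length : u.length + v.length = k := by simpa using congrArg List.length hπ.symm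
  have hπ_apply (i : Fin k) : π i = (u ++ v)[(i : ℕ)]'(by simp [h_length]) := by simp [← hπ]
  have hτ_apply (i : Fin k) : τ i = (u ++ v.reverse)[(i : ℕ)]'(by simp [h_length]) := by simp [← hτ]
  refine ⟨u.length, fun i hi => ?_, fun i hi => ?_⟩
  · simp [hπ_apply, hτ_apply, hi]
  · have h_index : v.length - 1 - (i - u.length) = k - 1 - i + u.length - u.length := by omega
    simp [hπ_apply, hτ_apply, List.getElem_append_right, hi, h_index]

theorem prefixRev_or_suffixRev (h : EndReversal (List.ofFn π) (List.ofFn τ)) :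
    PrefixRev k τ π ∨ SuffixRev k τ π := by
  obtain ⟨u, v, hπ, hτ | hτ⟩ := h
  · exact Or.inl (prefixRev_of_ofFn_eq hπ hτ)
  · exact Or.inr (suffixRev_of_ofFn_eq hπ hτ)

theorem prefixSuffixGraph_adj_of_wordGraph_adj
    (h : (wordGraph (Fin k)).Adj (List.ofFn π) (List.ofFn τ)) :
    (prefixSuffixGraph k).Adj π τ := by
  obtain ⟨h_ne, h_rev⟩ := (SimpleGraph.fromRel_adj _ _ _).1 h
  refine (SimpleGraph.fromRel_adj _ _ _).2 ⟨fun h_eq => h_ne (h_eq ▸ rfl), ?_⟩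
  exact h_rev.symm.imp prefixRev_or_suffixRev prefixRev_or_suffixRev

theorem edist_prefixSuffixGraph_le_length {l m : List (Fin k)} (p : (wordGraph (Fin k)).Walk l m)
    (hπ : List.ofFn π = l) (hτ : List.ofFn τ = m) :
    (prefixSuffixGraph k).edist π τ ≤ p.length := by
  induction p generalizing π with
  | nil =>
    obtain rfl : π = τ := DFunLike.coe_injective (List.ofFn_injective (hπ.trans hτ.symm))
    simp
  | cons h p ih =>
    subst hπ
    obtain ⟨σ, rfl⟩ := exists_ofFn_eq_of_perm (perm_of_wordGraph_adj h).symm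
    have h_first : (prefixSuffixGraph k).edist π σ ≤ 1 :=
      SimpleGraph.edist_le_one_iff_adj_or_eq.2 (Or.inl (prefixSuffixGraph_adj_of_wordGraph_adj h))
    simpa [add_comm] using edist_le_add_of_le h_first (ih rfl hτ)

theorem edist_prefixSuffixGraph_le_edist_wordGraph (π τ : Equiv.Perm (Fin k)) :
    (prefixSuffixGraph k).edist π τ ≤ (wordGraph (Fin k)).edist (List.ofFn π) (List.ofFn τ) :=
  le_iInf fun p => edist_prefixSuffixGraph_le_length p rfl rfl

end Perm

theorem ediam_prefixSuffixGraph_le (k : ℕ) :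
    (prefixSuffixGraph k).ediam ≤ ((3 * k + 3) / 2 : ℕ) := by
  refine SimpleGraph.ediam_le_of_edist_le fun π τ => ?_
  calc (prefixSuffixGraph k).edist π τ
      ≤ (wordGraph (Fin k)).edist (List.ofFn π) (List.ofFn τ) :=
        edist_prefixSuffixGraph_le_edist_wordGraph π τ
    _ ≤ ((3 * k + 3) / 2 : ℕ) := by
        simpa using edist_wordGraph_le_of_perm (ofFn_perm_ofFn π τ)

end EndReversal

/-- For every integer `k ≥ 1`, `h(k) ≤ (3/2)k + 4`, where `h(k)` is the
diameter of the graph `G_k` on permutations of `[k]` whose edges are prefix and suffix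
reversals. -/
theorem statement_0 (k : ℕ) (hk : 1 ≤ k) :
    ((prefixSuffixGraph k).diam : ℚ) ≤ 3 / 2 * (k : ℚ) + 4 := by
  have h_diam : (prefixSuffixGraph k).diam ≤ (3 * k + 3) / 2 :=
    ENat.toNat_le_of_le_natCast (EndReversal.ediam_prefixSuffixGraph_le k)
  have h_two_mul : (2 * (prefixSuffixGraph k).diam : ℚ) ≤ 3 * k + 3 :=
    mod_cast (by omega : 2 * (prefixSuffixGraph k).diam ≤ 3 * k + 3)
  linarith
end

section
/- For every even integer k = 2d with d ≥ 1, h(k) ≤ (3/2)·k + 2, where h(k) is the diameter of the graph G_k on the permutations of [k] whose edges are prefix and suffix reversals. -/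
/-! A permutation is a list cut into singletons and blocks, a block being a run
`x, φ x, ψ (φ x), φ (ψ (φ x)), …` of even length, where `φ = partner` and `ψ = prevVal` are the two
perfect matchings of the cycle `0, 1, …, 2d - 1`. Give a singleton weight `3` and a block weight `4`
(twice the potential `nu`). As long as the list is not a single block, look at its first entry `a`.
If `a` is a singleton then so is `φ a`, and one reversal pairs them. If `a` starts a block, that
block is joined to the block containing `ψ a` in at most two reversals, or, if `ψ a` is a singleton,
to both `ψ a` and `φ (ψ a)` in three. Each time `m` reversals lower the weight by at least `2 * m`.
The weight starts at `6 * d` and ends at `4`, so `3 * d - 2` reversals produce a single block. Such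
a block is a rotation of the identity or of its reverse, and four more reversals sort it. -/

open Function Set

namespace PrefixSuffix

variable {α β : Type*}

/-! ### Reversals of lists -/

/-- One prefix or suffix reversal of a list. Reversing the empty prefix is allowed, so the relation
is reflexive. -/
def ReversalStep (l l' : List α) : Prop :=
  ∃ u v, l = u ++ v ∧ (l' = u.reverse ++ v ∨ l' = u ++ v.reverse)

/-- `ReversalReach n l l'`: the list `l` can be turned into `l'` by `n` prefix or suffix reversals;
as steps may be trivial, this means at most `n`. -/
inductive ReversalReach : ℕ → List α → List α → Prop
  | refl (l) : ReversalReach 0 l l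
  | step {n l m l'} : ReversalStep l m → ReversalReach n m l' → ReversalReach (n + 1) l l'

theorem ReversalStep.refl (l : List α) : ReversalStep l l :=
  ⟨[], l, rfl, Or.inl rfl⟩

theorem ReversalStep.perm {l l' : List α} (h : ReversalStep l l') : l.Perm l' := by
  obtain ⟨u, v, rfl, rfl | rfl⟩ := h
  · exact (List.reverse_perm u).symm.append_right v
  · exact (List.reverse_perm v).symm.append_left u

theorem ReversalStep.map (f : α → β) {l l' : List α} (h : ReversalStep l l') :
    ReversalStep (l.map f) (l'.map f) := by
  obtain ⟨u, v, rfl, rfl | rfl⟩ := h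
  · exact ⟨u.map f, v.map f, by simp, Or.inl (by simp)⟩
  · exact ⟨u.map f, v.map f, by simp, Or.inr (by simp)⟩

namespace ReversalReach

theorem perm {n : ℕ} {l l' : List α} (h : ReversalReach n l l') : l.Perm l' := by
  induction h with
  | refl => exact List.Perm.refl _
  | step h _ ih => exact h.perm.trans ih

theorem map (f : α → β) {n : ℕ} {l l' : List α} (h : ReversalReach n l l') :
    ReversalReach n (l.map f) (l'.map f) := by
  induction h with
  | refl => exact refl _
  | step h _ ih => exact step (h.map f) ih

theorem trans {n m : ℕ} {l₁ l₂ l₃ : List α} (h : ReversalReach n l₁ l₂)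
    (h' : ReversalReach m l₂ l₃) : ReversalReach (n + m) l₁ l₃ := by
  induction h with
  | refl => simpa only [Nat.zero_add] using h'
  | step h _ ih => simpa only [Nat.add_right_comm] using step h (ih h')

theorem mono {n m : ℕ} {l l' : List α} (h : ReversalReach n l l') (hnm : n ≤ m) :
    ReversalReach m l l' := by
  induction hnm with
  | refl => exact h
  | step _ ih => exact step (ReversalStep.refl l) ih

theorem reverse_prefix (u v : List α) : ReversalReach 1 (u ++ v) (u.reverse ++ v) :=
  step ⟨u, v, rfl, Or.inl rfl⟩ (refl _)

theorem reverse_suffix (u v : List α) : ReversalReach 1 (u ++ v) (u ++ v.reverse) :=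
  step ⟨u, v, rfl, Or.inr rfl⟩ (refl _)

theorem reverse (l : List α) : ReversalReach 1 l l.reverse := by
  simpa using reverse_prefix l []

theorem move_to_front (u : List α) (x : α) (v : List α) :
    ReversalReach 2 (u ++ x :: v) (x :: (u ++ v)) := by
  simpa using (reverse_prefix u (x :: v)).trans
    (by simpa using reverse_prefix (u.reverse ++ [x]) v)

theorem of_isRotated {l l' : List α} (h : l ~r l') : ReversalReach 3 l l' := by
  obtain ⟨n, hn, rfl⟩ := List.isRotated_iff_mod.1 h
  have swap (u v : List α) : ReversalReach 3 (u ++ v) (v ++ u) := by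
    simpa using ((reverse_prefix u v).trans (reverse_suffix _ v)).trans (reverse _)
  simpa [List.rotate_eq_drop_append_take hn] using swap (l.take n) (l.drop n)

end ReversalReach

/-! ### Blocks -/

/-- `IsBlock φ ψ a l b`: the list `l` is a block starting at `a` and ending at `b`, that is,
`l = [a, φ a, ψ (φ a), φ (ψ (φ a)), …, b]` with alternating applications of `φ` and `ψ`, the first
and the last one being `φ`. -/
inductive IsBlock (φ ψ : α → α) : α → List α → α → Prop
  | pair (x) : IsBlock φ ψ x [x, φ x] (φ x)
  | cons (x) {l b} : IsBlock φ ψ (ψ (φ x)) l b → IsBlock φ ψ x (x :: φ x :: l) b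

namespace IsBlock

variable {φ ψ : α → α} {a b c : α} {l m : List α}

theorem head?_eq (h : IsBlock φ ψ a l b) : l.head? = some a := by
  cases h <;> rfl

theorem head_mem (h : IsBlock φ ψ a l b) : a ∈ l :=
  List.mem_of_mem_head? h.head?_eq

theorem two_le_length (h : IsBlock φ ψ a l b) : 2 ≤ l.length := by
  cases h <;> simp

theorem append (h : IsBlock φ ψ a l b) (h' : IsBlock φ ψ (ψ b) m c) :
    IsBlock φ ψ a (l ++ m) c := by
  induction h with
  | pair x => exact cons x h'
  | cons x _ ih => exact cons x (ih h')

theorem reverse (hφ : Involutive φ) (hψ : Involutive ψ) (h : IsBlock φ ψ a l b) :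
    IsBlock φ ψ b l.reverse a := by
  have pair_swap (x : α) : IsBlock φ ψ (φ x) [φ x, x] x := by
    simpa only [hφ x] using pair (φ := φ) (ψ := ψ) (φ x)
  induction h with
  | pair x => exact pair_swap x
  | cons x _ ih =>
    simpa using ih.append (m := [φ x, x]) (by simpa only [hψ (φ x)] using pair_swap x)

theorem apply_left_mem (hφ : Involutive φ) (h : IsBlock φ ψ a l b) {z : α} (hz : z ∈ l) :
    φ z ∈ l := by
  induction h with
  | pair x =>
    rw [List.mem_pair] at hz
    rcases hz with rfl | rfl <;> simp [hφ _]
  | cons x _ ih =>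
    rw [List.mem_cons, List.mem_cons] at hz
    rcases hz with rfl | rfl | hz
    · simp
    · simp [hφ _]
    · simp [ih hz]

theorem eq_head_or_eq_last_or_apply_right_mem_tail (hψ : Involutive ψ)
    (h : IsBlock φ ψ a l b) {z : α} (hz : z ∈ l) : z = a ∨ z = b ∨ ψ z ∈ l.tail := by
  induction h with
  | pair x =>
    rw [List.mem_pair] at hz
    exact hz.imp_right Or.inl
  | cons x hl ih =>
    rw [List.mem_cons, List.mem_cons] at hz
    rcases hz with rfl | rfl | hz
    · simp
    · simp [hl.head_mem]
    · rcases ih hz with rfl | rfl | hz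
      · simp [hψ _]
      · simp
      · simp [List.mem_of_mem_tail hz]

theorem apply_right_mem (hψ : Involutive ψ) (hψ_ne : ∀ x, ψ x ≠ x) (h : IsBlock φ ψ a l b)
    (hl : l.Nodup) (ha : ψ a ∈ l) {z : α} (hz : z ∈ l) : ψ z ∈ l := by
  have head_notMem_tail : a ∉ l.tail := by
    obtain ⟨t, rfl⟩ := List.head?_eq_some_iff.1 h.head?_eq
    exact (List.nodup_cons.1 hl).1
  have last_eq : ψ a = b := by
    rcases h.eq_head_or_eq_last_or_apply_right_mem_tail hψ ha with hψa | hψa | hψa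
    · exact absurd hψa (hψ_ne a)
    · exact hψa
    · exact absurd (hψ a ▸ hψa) head_notMem_tail
  rcases h.eq_head_or_eq_last_or_apply_right_mem_tail hψ hz with rfl | rfl | hψz
  · exact ha
  · rw [← last_eq, hψ a]
    exact h.head_mem
  · exact List.mem_of_mem_tail hψz

end IsBlock

/-! ### Pieces and their weights -/

/-- A piece is a singleton or a block. -/
def IsPiece (φ ψ : α → α) (p : List α) : Prop :=
  (∃ x, p = [x]) ∨ ∃ a b, IsBlock φ ψ a p b

/-- The weight of a list of pieces: `3` for every singleton and `4` for every block, which is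
twice the potential `ν` of the paper. -/
def weight (L : List (List α)) : ℕ :=
  (L.map fun p => if p.length = 1 then 3 else 4).sum

/-- The list of pieces of the reversed list: both the pieces and their order are reversed. -/
def reversePieces (L : List (List α)) : List (List α) :=
  (L.map List.reverse).reverse

theorem flatten_reversePieces (L : List (List α)) :
    (reversePieces L).flatten = L.flatten.reverse :=
  List.reverse_flatten.symm

theorem weight_nil : weight ([] : List (List α)) = 0 :=
  rfl

theorem weight_append (L M : List (List α)) : weight (L ++ M) = weight L + weight M := by
  simp [weight]

theorem weight_singleton_cons (x : α) (L : List (List α)) :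
    weight ([x] :: L) = 3 + weight L := by
  simp [weight]

theorem weight_map_singleton (l : List α) : weight (l.map fun x => [x]) = 3 * l.length := by
  simp [weight, Function.comp_def, mul_comm]

theorem weight_reversePieces (L : List (List α)) : weight (reversePieces L) = weight L := by
  simp [weight, reversePieces, List.sum_reverse, Function.comp_def]

section Pieces

variable {φ ψ : α → α} {a b c : α} {p B P : List α} {L X Y : List (List α)}

theorem IsBlock.isPiece (h : IsBlock φ ψ a p b) : IsPiece φ ψ p :=
  Or.inr ⟨a, b, h⟩

theorem IsBlock.weight_cons (h : IsBlock φ ψ a p b) (L : List (List α)) :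
    weight (p :: L) = 4 + weight L := by
  have : p.length ≠ 1 := by have := h.two_le_length; omega
  simp [weight, this]

theorem isPiece_singleton (x : α) : IsPiece φ ψ [x] :=
  Or.inl ⟨x, rfl⟩

theorem IsPiece.ne_nil (h : IsPiece φ ψ p) : p ≠ [] := by
  rcases h with ⟨x, rfl⟩ | ⟨a, b, h⟩
  · exact List.cons_ne_nil _ _
  · exact List.ne_nil_of_mem h.head_mem

theorem IsPiece.reverse (hφ : Involutive φ) (hψ : Involutive ψ) (h : IsPiece φ ψ p) :
    IsPiece φ ψ p.reverse := by
  rcases h with ⟨x, rfl⟩ | ⟨a, b, h⟩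
  · exact isPiece_singleton x
  · exact (h.reverse hφ hψ).isPiece

theorem forall_isPiece_reversePieces (hφ : Involutive φ) (hψ : Involutive ψ)
    (h : ∀ p ∈ L, IsPiece φ ψ p) : ∀ p ∈ reversePieces L, IsPiece φ ψ p := by
  intro p hp
  have hp' : p.reverse ∈ L := by simpa [reversePieces] using hp
  simpa using (h _ hp').reverse hφ hψ

theorem reversalReach_merge (B P : List α) (X Y : List (List α)) :
    ReversalReach 1 (B :: (X ++ P :: Y)).flatten
      (reversePieces X ++ (B.reverse ++ P) :: Y).flatten := by
  simpa [flatten_reversePieces] using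
    ReversalReach.reverse_prefix (B ++ X.flatten) (P ++ Y.flatten)

/-! ### Lowering the weight -/

/-- Some positive number `n` of reversals turns `L.flatten` into a list which can be cut into
pieces whose weight is lower by at least `2 * n`. -/
def IsImprovable (φ ψ : α → α) (L : List (List α)) : Prop :=
  ∃ n > 0, ∃ L', ReversalReach n L.flatten L'.flatten ∧ (∀ p ∈ L', IsPiece φ ψ p) ∧
    weight L' + 2 * n ≤ weight L

theorem isImprovable_of_singletons (hφ : Involutive φ) (hψ : Involutive ψ) (x : α)
    (hX : ∀ p ∈ X, IsPiece φ ψ p) (hY : ∀ p ∈ Y, IsPiece φ ψ p) :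
    IsImprovable φ ψ ([x] :: (X ++ [φ x] :: Y)) := by
  have merged : IsBlock φ ψ x [x, φ x] (φ x) := .pair x
  refine ⟨1, one_pos, _, reversalReach_merge [x] [φ x] X Y, ?_, ?_⟩
  · exact List.forall_mem_append.2 ⟨forall_isPiece_reversePieces hφ hψ hX,
      List.forall_mem_cons.2 ⟨merged.isPiece, hY⟩⟩
  · simp only [List.reverse_singleton, List.singleton_append, weight_append, weight_reversePieces,
      weight_singleton_cons, merged.weight_cons]
    omega

theorem isImprovable_of_block_head (hφ : Involutive φ) (hψ : Involutive ψ)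
    (hB : IsBlock φ ψ a B b) (hP : IsBlock φ ψ (ψ a) P c)
    (hX : ∀ p ∈ X, IsPiece φ ψ p) (hY : ∀ p ∈ Y, IsPiece φ ψ p) :
    IsImprovable φ ψ (B :: (X ++ P :: Y)) := by
  have merged : IsBlock φ ψ b (B.reverse ++ P) c := (hB.reverse hφ hψ).append hP
  refine ⟨1, one_pos, _, reversalReach_merge B P X Y, ?_, ?_⟩
  · exact List.forall_mem_append.2 ⟨forall_isPiece_reversePieces hφ hψ hX,
      List.forall_mem_cons.2 ⟨merged.isPiece, hY⟩⟩
  · simp only [weight_append, weight_reversePieces, hB.weight_cons, hP.weight_cons,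
      merged.weight_cons]
    omega

theorem isImprovable_of_block_last (hφ : Involutive φ) (hψ : Involutive ψ)
    (hB : IsBlock φ ψ a B b) (hP : IsBlock φ ψ c P (ψ a))
    (hX : ∀ p ∈ X, IsPiece φ ψ p) (hY : ∀ p ∈ Y, IsPiece φ ψ p) :
    IsImprovable φ ψ (B :: (X ++ P :: Y)) := by
  have merged : IsBlock φ ψ b (B.reverse ++ P.reverse) c :=
    (hB.reverse hφ hψ).append (hP.reverse hφ hψ)
  have reverse_from_P : ReversalReach 1 (B :: (X ++ P :: Y)).flatten
      (B :: (X ++ reversePieces Y ++ [P.reverse])).flatten := by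
    simpa [flatten_reversePieces] using
      ReversalReach.reverse_suffix (B ++ X.flatten) (P ++ Y.flatten)
  refine ⟨2, two_pos, reversePieces (X ++ reversePieces Y) ++ [B.reverse ++ P.reverse],
    reverse_from_P.trans (reversalReach_merge _ _ _ []), ?_, ?_⟩
  · have hXY := List.forall_mem_append.2 ⟨hX, forall_isPiece_reversePieces hφ hψ hY⟩
    exact List.forall_mem_append.2 ⟨forall_isPiece_reversePieces hφ hψ hXY,
      List.forall_mem_singleton.2 merged.isPiece⟩
  · simp only [weight_append, weight_reversePieces, hB.weight_cons, hP.weight_cons,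
      merged.weight_cons, weight_nil]
    omega

theorem isImprovable_of_block_singleton (hφ : Involutive φ) (hψ : Involutive ψ)
    (hB : IsBlock φ ψ a B b) (hX : ∀ p ∈ X, IsPiece φ ψ p) (hY : ∀ p ∈ Y, IsPiece φ ψ p)
    (hmem : [φ (ψ a)] ∈ X ++ Y) : IsImprovable φ ψ (B :: (X ++ [ψ a] :: Y)) := by
  obtain ⟨Z, W, hZW⟩ := List.append_of_mem hmem
  obtain ⟨hZ, hW⟩ := List.forall_mem_append.1 (hZW ▸ List.forall_mem_append.2 ⟨hX, hY⟩)
  have merged : IsBlock φ ψ b (B.reverse ++ [ψ a, φ (ψ a)]) (φ (ψ a)) :=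
    (hB.reverse hφ hψ).append (.pair (ψ a))
  have bring_to_front : ReversalReach 2 (B :: (X ++ [ψ a] :: Y)).flatten
      ((ψ a :: B) :: (Z ++ [φ (ψ a)] :: W)).flatten := by
    rw [← hZW]
    simpa using ReversalReach.move_to_front (B ++ X.flatten) (ψ a) Y.flatten
  refine ⟨3, three_pos, reversePieces Z ++ (B.reverse ++ [ψ a, φ (ψ a)]) :: W,
    by simpa using bring_to_front.trans (reversalReach_merge _ _ _ _), ?_, ?_⟩
  · exact List.forall_mem_append.2 ⟨forall_isPiece_reversePieces hφ hψ hZ,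
      List.forall_mem_cons.2 ⟨merged.isPiece, (List.forall_mem_cons.1 hW).2⟩⟩
  · have weight_XY := congrArg weight hZW
    simp only [weight_append, weight_reversePieces, weight_singleton_cons, hB.weight_cons,
      merged.weight_cons] at weight_XY ⊢
    omega

end Pieces

/-! ### Reduction to a single block -/

/-- The edges `x — φ x` and `x — ψ x` form two perfect matchings whose union is a single cycle. -/
structure IsAlternatingCycle (φ ψ : α → α) : Prop where
  involutive_left : Involutive φ
  involutive_right : Involutive ψ
  left_ne : ∀ x, φ x ≠ x
  right_ne : ∀ x, ψ x ≠ x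
  eq_univ : ∀ s : Set α, s.Nonempty → MapsTo φ s s → MapsTo ψ s s → s = univ

/-- `L` cuts an ordering `L.flatten` of all elements of the type into pieces. -/
structure IsTiling (φ ψ : α → α) (L : List (List α)) : Prop where
  isPiece : ∀ p ∈ L, IsPiece φ ψ p
  nodup : L.flatten.Nodup
  mem_flatten : ∀ x, x ∈ L.flatten

namespace IsTiling

variable {φ ψ : α → α} {a b x : α} {p q B : List α} {L L' rest : List (List α)}

theorem map_singleton {l : List α} (hl : l.Nodup) (hmem : ∀ x, x ∈ l) :
    IsTiling φ ψ (l.map fun x => [x]) := by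
  refine ⟨?_, by simpa [← List.flatMap_def] using hl, by simpa using hmem⟩
  simpa using fun x _ => isPiece_singleton x

theorem of_reversalReach (h : IsTiling φ ψ L) {n : ℕ}
    (hreach : ReversalReach n L.flatten L'.flatten) (hL' : ∀ p ∈ L', IsPiece φ ψ p) :
    IsTiling φ ψ L' :=
  ⟨hL', hreach.perm.nodup_iff.1 h.nodup, fun x => hreach.perm.mem_iff.1 (h.mem_flatten x)⟩

theorem exists_mem (h : IsTiling φ ψ L) (x : α) : ∃ p ∈ L, x ∈ p :=
  List.mem_flatten.1 (h.mem_flatten x)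

theorem eq_of_mem (h : IsTiling φ ψ L) (hp : p ∈ L) (hq : q ∈ L) (hxp : x ∈ p) (hxq : x ∈ q) :
    p = q := by
  by_contra hpq
  have : Std.Symm (List.Disjoint (α := α)) := ⟨fun _ _ => List.Disjoint.symm⟩
  exact (List.nodup_flatten.1 h.nodup).2.forall hp hq hpq hxp hxq

theorem singleton_apply_left_mem (hφ : Involutive φ) (h : IsTiling φ ψ L) (hx : [x] ∈ L) :
    [φ x] ∈ L := by
  obtain ⟨p, hp, hφx⟩ := h.exists_mem (φ x)
  rcases h.isPiece p hp with ⟨y, rfl⟩ | ⟨a, b, hblock⟩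
  · rwa [List.mem_singleton.1 hφx]
  · have hxp : x ∈ p := hφ x ▸ hblock.apply_left_mem hφ hφx
    obtain rfl := h.eq_of_mem hp hx hxp (List.mem_singleton_self x)
    exact absurd hblock.two_le_length (by simp)

theorem isImprovable_of_singleton (hc : IsAlternatingCycle φ ψ)
    (h : IsTiling φ ψ ([x] :: rest)) : IsImprovable φ ψ ([x] :: rest) := by
  have hmem : [φ x] ∈ rest := by
    simpa [hc.left_ne x] using
      h.singleton_apply_left_mem hc.involutive_left List.mem_cons_self
  obtain ⟨X, Y, rfl⟩ := List.append_of_mem hmem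
  obtain ⟨hX, hY⟩ := List.forall_mem_append.1 (List.forall_mem_cons.1 h.isPiece).2
  exact isImprovable_of_singletons hc.involutive_left hc.involutive_right x hX
    (List.forall_mem_cons.1 hY).2

theorem eq_nil_of_apply_right_head_mem (hc : IsAlternatingCycle φ ψ)
    (h : IsTiling φ ψ (B :: rest)) (hB : IsBlock φ ψ a B b) (ha : ψ a ∈ B) : rest = [] := by
  obtain ⟨nodup_B, -, disjoint⟩ := List.nodup_append'.1 h.nodup
  have mem_B (x : α) : x ∈ B := by
    have univ_eq : {x | x ∈ B} = univ := hc.eq_univ _ ⟨a, hB.head_mem⟩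
      (fun _ => hB.apply_left_mem hc.involutive_left)
      (fun _ => hB.apply_right_mem hc.involutive_right hc.right_ne nodup_B ha)
    exact univ_eq.ge (mem_univ x)
  refine List.eq_nil_iff_forall_not_mem.2 fun p hp => ?_
  obtain ⟨x, hx⟩ := List.exists_mem_of_ne_nil p (h.isPiece p (List.mem_cons_of_mem _ hp)).ne_nil
  exact disjoint (mem_B x) (List.mem_flatten_of_mem hp hx)

theorem isImprovable_of_block (hc : IsAlternatingCycle φ ψ)
    (h : IsTiling φ ψ (B :: rest)) (hB : IsBlock φ ψ a B b) (ha : ψ a ∉ B) :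
    IsImprovable φ ψ (B :: rest) := by
  have hφ := hc.involutive_left
  have hψ := hc.involutive_right
  obtain ⟨P, hP, hψa⟩ := h.exists_mem (ψ a)
  have hPB : P ≠ B := by
    rintro rfl
    exact ha hψa
  obtain ⟨X, Y, rfl⟩ := List.append_of_mem ((List.mem_cons.1 hP).resolve_left hPB)
  obtain ⟨hX, hPY⟩ := List.forall_mem_append.1 (List.forall_mem_cons.1 h.isPiece).2
  obtain ⟨hPpiece, hY⟩ := List.forall_mem_cons.1 hPY
  rcases hPpiece with ⟨y, rfl⟩ | ⟨c, e, hPblock⟩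
  · obtain rfl := List.mem_singleton.1 hψa
    refine isImprovable_of_block_singleton hφ hψ hB hX hY ?_
    have hne : [φ (ψ a)] ≠ B := by
      rintro rfl
      exact absurd hB.two_le_length (by simp)
    simpa [hne, hc.left_ne] using h.singleton_apply_left_mem hφ hP
  · rcases hPblock.eq_head_or_eq_last_or_apply_right_mem_tail hψ hψa with rfl | rfl | ha'
    · exact isImprovable_of_block_head hφ hψ hB hPblock hX hY
    · exact isImprovable_of_block_last hφ hψ hB hPblock hX hY
    · rw [hψ a] at ha'
      exact absurd (h.eq_of_mem hP List.mem_cons_self (List.mem_of_mem_tail ha') hB.head_mem) hPB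

theorem eq_singleton_block_or_isImprovable [Nonempty α] (hc : IsAlternatingCycle φ ψ)
    (h : IsTiling φ ψ L) : (∃ B a b, IsBlock φ ψ a B b ∧ L = [B]) ∨ IsImprovable φ ψ L := by
  obtain ⟨x⟩ := ‹Nonempty α›
  obtain ⟨p, hp, -⟩ := h.exists_mem x
  obtain ⟨B, rest, rfl⟩ := List.exists_cons_of_ne_nil (List.ne_nil_of_mem hp)
  rcases h.isPiece B List.mem_cons_self with ⟨y, rfl⟩ | ⟨a, b, hB⟩
  · exact Or.inr (h.isImprovable_of_singleton hc)
  · by_cases ha : ψ a ∈ B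
    · exact Or.inl ⟨B, a, b, hB, by rw [h.eq_nil_of_apply_right_head_mem hc hB ha]⟩
    · exact Or.inr (h.isImprovable_of_block hc hB ha)

theorem exists_reversalReach_block [Nonempty α] (hc : IsAlternatingCycle φ ψ)
    (h : IsTiling φ ψ L) :
    ∃ n l a b, ReversalReach n L.flatten l ∧ IsBlock φ ψ a l b ∧ 2 * n + 4 ≤ weight L := by
  induction hw : weight L using Nat.strong_induction_on generalizing L with
  | _ w ih =>
    subst hw
    rcases h.eq_singleton_block_or_isImprovable hc with
      ⟨B, a, b, hB, rfl⟩ | ⟨m, hm, L', hreach, hL', hle⟩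
    · refine ⟨0, B, a, b, by simpa using ReversalReach.refl B, hB, ?_⟩
      simp [hB.weight_cons]
    · obtain ⟨n, l, a, b, hreach', hl, hn⟩ :=
        ih (weight L') (by omega) (h.of_reversalReach hreach hL') rfl
      exact ⟨m + n, l, a, b, hreach.trans hreach', hl, by omega⟩

end IsTiling

/-! ### The cycle `0, 1, …, 2d - 1` -/

theorem val_finRotate {n : ℕ} (i : Fin n) : (finRotate n i : ℕ) = (i + 1) % n := by
  have := i.neZero
  rw [finRotate_apply, Fin.val_add, Fin.val_one', Nat.add_mod_mod]

theorem isRotated_finRange_of_isChain {n : ℕ} {l : List (Fin n)} (hlen : l.length = n)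
    (h : l.IsChain fun i j => finRotate n i = j) : l ~r List.finRange n := by
  rcases l with _ | ⟨a, t⟩
  · obtain rfl : n = 0 := hlen.symm
    simp
  have val_getElem (i : ℕ) (hi : i < (a :: t).length) : ((a :: t)[i] : ℕ) = (i + a) % n := by
    induction i with
    | zero => simp [Nat.mod_eq_of_lt a.isLt]
    | succ i ih =>
      rw [← List.isChain_iff_getElem.1 h i hi, val_finRotate, ih, Nat.mod_add_mod,
        Nat.add_right_comm]
  refine List.IsRotated.symm ⟨a, List.ext_getElem (by simpa using hlen.symm) fun i _ hi => ?_⟩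
  ext
  simp [List.getElem_rotate, val_getElem i hi]

theorem eq_univ_of_mapsTo_finRotate {n : ℕ} {s : Set (Fin n)} (hs : s.Nonempty)
    (h : MapsTo (finRotate n) s s) : s = univ := by
  obtain ⟨i, hi⟩ := hs
  have := i.neZero
  refine eq_univ_of_forall fun k => ?_
  have iterate_eq : (finRotate n)^[(k - i : Fin n)] i = k := by
    rw [← finCycle_eq_finRotate_iterate, finCycle_apply, add_sub_cancel]
  exact iterate_eq ▸ h.iterate _ hi

section Cycle

variable {d : ℕ} {j : Fin (2 * d)}

theorem partner_of_even (hj : Even (j : ℕ)) : partner d j = finRotate _ j := by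
  ext
  rw [val_finRotate, Nat.mod_eq_of_lt (by grind)]
  simp [partner, Nat.even_iff.1 hj]

theorem finRotate_partner_of_odd (hj : Odd (j : ℕ)) : finRotate _ (partner d j) = j := by
  ext
  have hval : (partner d j : ℕ) + 1 = j := by simp [partner]; grind
  rw [val_finRotate, hval, Nat.mod_eq_of_lt j.isLt]

theorem prevVal_of_odd (hj : Odd (j : ℕ)) : prevVal d j = finRotate _ j := by
  ext
  rw [val_finRotate]
  simp [prevVal, Nat.odd_iff.1 hj]

theorem finRotate_prevVal_of_even (hj : Even (j : ℕ)) : finRotate _ (prevVal d j) = j := by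
  ext
  have hval : (j : ℕ) + 2 * d - 1 + 1 = j + 2 * d := by have := j.isLt; omega
  rw [val_finRotate]
  simp [prevVal, Nat.even_iff.1 hj, hval, Nat.mod_eq_of_lt j.isLt]

theorem even_finRotate_iff : Even (finRotate _ j : ℕ) ↔ Odd (j : ℕ) := by
  rw [val_finRotate, Nat.even_iff, Nat.mod_mod_of_dvd _ (dvd_mul_right 2 d), Nat.odd_iff]
  omega

theorem even_partner_iff : Even (partner d j : ℕ) ↔ Odd (j : ℕ) := by
  rcases Nat.even_or_odd (j : ℕ) with hj | hj
  · rw [partner_of_even hj, even_finRotate_iff]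
  · have := finRotate_partner_of_odd hj ▸ even_finRotate_iff (j := partner d j)
    grind

theorem even_prevVal_iff : Even (prevVal d j : ℕ) ↔ Odd (j : ℕ) := by
  rcases Nat.even_or_odd (j : ℕ) with hj | hj
  · have := finRotate_prevVal_of_even hj ▸ even_finRotate_iff (j := prevVal d j)
    grind
  · rw [prevVal_of_odd hj, even_finRotate_iff]

theorem partner_involutive : Involutive (partner d) := by
  intro j
  rcases Nat.even_or_odd (j : ℕ) with hj | hj
  · have partner_odd : Odd (partner d j : ℕ) := by grind [even_partner_iff (j := j)]
    apply (finRotate _).injective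
    rw [finRotate_partner_of_odd partner_odd, partner_of_even hj]
  · rw [partner_of_even (even_partner_iff.2 hj), finRotate_partner_of_odd hj]

theorem prevVal_involutive : Involutive (prevVal d) := by
  intro j
  rcases Nat.even_or_odd (j : ℕ) with hj | hj
  · have prevVal_odd : Odd (prevVal d j : ℕ) := by grind [even_prevVal_iff (j := j)]
    rw [prevVal_of_odd prevVal_odd, finRotate_prevVal_of_even hj]
  · apply (finRotate _).injective
    rw [finRotate_prevVal_of_even (even_prevVal_iff.2 hj), prevVal_of_odd hj]

theorem isAlternatingCycle_partner_prevVal : IsAlternatingCycle (partner d) (prevVal d) where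
  involutive_left := partner_involutive
  involutive_right := prevVal_involutive
  left_ne j hj := by grind [even_partner_iff (j := j)]
  right_ne j hj := by grind [even_prevVal_iff (j := j)]
  eq_univ s hs hpartner hprevVal := by
    refine eq_univ_of_mapsTo_finRotate hs fun j hj => ?_
    rcases Nat.even_or_odd (j : ℕ) with hj' | hj'
    · exact partner_of_even hj' ▸ hpartner hj
    · exact prevVal_of_odd hj' ▸ hprevVal hj

variable {a b : Fin (2 * d)} {l : List (Fin (2 * d))}

theorem IsBlock.isChain_finRotate (h : IsBlock (partner d) (prevVal d) a l b)
    (ha : Even (a : ℕ)) : l.IsChain fun i j => finRotate _ i = j := by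
  induction h with
  | pair x => simpa using (partner_of_even ha).symm
  | cons x hl ih =>
    have partner_odd : Odd (partner d x : ℕ) := by grind [even_partner_iff (j := x)]
    refine List.IsChain.cons_cons (partner_of_even ha).symm (List.isChain_cons.2 ⟨?_, ?_⟩)
    · simpa [hl.head?_eq] using (prevVal_of_odd partner_odd).symm
    · exact ih (even_prevVal_iff.2 partner_odd)

theorem IsBlock.even_last (h : IsBlock (partner d) (prevVal d) a l b) (ha : Odd (a : ℕ)) :
    Even (b : ℕ) := by
  induction h with
  | pair x => exact even_partner_iff.2 ha
  | cons x _ ih =>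
    exact ih (by grind [even_partner_iff (j := x), even_prevVal_iff (j := partner d x)])

theorem IsBlock.reversalReach_finRange (h : IsBlock (partner d) (prevVal d) a l b)
    (hlen : l.length = 2 * d) : ReversalReach 4 l (List.finRange (2 * d)) := by
  rcases Nat.even_or_odd (a : ℕ) with ha | ha
  · have chain := h.isChain_finRotate ha
    exact (ReversalReach.of_isRotated (isRotated_finRange_of_isChain hlen chain)).mono
      (by norm_num)
  · have hrev := h.reverse partner_involutive prevVal_involutive
    have chain := hrev.isChain_finRotate (h.even_last ha)
    exact (ReversalReach.reverse l).trans
      (.of_isRotated (isRotated_finRange_of_isChain (by simpa using hlen) chain))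

theorem reversalReach_finRange (hd : 1 ≤ d) (hnodup : l.Nodup) (hmem : ∀ x, x ∈ l) :
    ReversalReach (3 * d + 2) l (List.finRange (2 * d)) := by
  have : Nonempty (Fin (2 * d)) := ⟨⟨0, by omega⟩⟩
  have hlen : l.length = 2 * d := by
    simpa using (List.perm_of_nodup_nodup_toFinset_eq hnodup (List.nodup_finRange (2 * d))
      (by ext; simp [hmem])).length_eq
  obtain ⟨n, l', a, b, hreach, hblock, hn⟩ := (IsTiling.map_singleton hnodup hmem)
    |>.exists_reversalReach_block isAlternatingCycle_partner_prevVal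
  rw [weight_map_singleton, hlen] at hn
  rw [← List.flatMap_def, List.flatMap_singleton'] at hreach
  exact (hreach.trans (hblock.reversalReach_finRange (hreach.perm.length_eq ▸ hlen))).mono
    (by omega)

end Cycle

/-! ### From lists to permutations -/

section Graph

variable {k n : ℕ} {π τ : Equiv.Perm (Fin k)} {u v l : List (Fin k)}

theorem exists_ofFn_eq_of_perm (h : (List.ofFn π).Perm l) :
    ∃ τ : Equiv.Perm (Fin k), List.ofFn τ = l := by
  have hlen : l.length = k := by simpa using h.length_eq.symm
  have hnodup : l.Nodup := h.nodup_iff.1 (List.nodup_ofFn.2 π.injective)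
  have hmem (x : Fin k) : x ∈ l := h.mem_iff.1 (List.mem_ofFn.2 (π.surjective x))
  refine ⟨(finCongr hlen.symm).trans (hnodup.getEquivOfForallMemList l hmem), ?_⟩
  exact List.ext_getElem (by simp [hlen]) fun i _ _ => by simp

theorem apply_eq_getElem_of_ofFn_eq (h : List.ofFn π = l) (i : Fin k) :
    π i = l[(i : ℕ)]'(by simp [← h]) := by
  simp [← h]

theorem prefixRev_of_ofFn_eq (hπ : List.ofFn π = u ++ v) (hτ : List.ofFn τ = u.reverse ++ v) :
    PrefixRev k τ π := by
  have hlen : u.length + v.length = k := by simpa using (congrArg List.length hπ).symm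
  refine ⟨u.length, by omega, fun i hi => ?_, fun i hi => ?_⟩ <;>
    rw [apply_eq_getElem_of_ofFn_eq hπ, apply_eq_getElem_of_ofFn_eq hτ]
  · rw [List.getElem_append_right (by simpa using hi), List.getElem_append_right hi]
    simp
  · rw [List.getElem_append_left (by simpa using hi), List.getElem_append_left (by grind)]
    simp

theorem suffixRev_of_ofFn_eq (hπ : List.ofFn π = u ++ v) (hτ : List.ofFn τ = u ++ v.reverse) :
    SuffixRev k τ π := by
  have hlen : u.length + v.length = k := by simpa using (congrArg List.length hπ).symm
  refine ⟨u.length, fun i hi => ?_, fun i hi => ?_⟩ <;>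
    rw [apply_eq_getElem_of_ofFn_eq hπ, apply_eq_getElem_of_ofFn_eq hτ]
  · rw [List.getElem_append_left hi, List.getElem_append_left hi]
  · rw [List.getElem_append_right hi, List.getElem_append_right (by simp), List.getElem_reverse]
    grind

theorem edist_le_one_of_reversalStep (h : ReversalStep (List.ofFn π) (List.ofFn τ)) :
    (prefixSuffixGraph k).edist π τ ≤ 1 := by
  have hrel : PrefixRev k τ π ∨ SuffixRev k τ π := by
    obtain ⟨u, v, hπ, hτ | hτ⟩ := h
    · exact Or.inl (prefixRev_of_ofFn_eq hπ hτ)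
    · exact Or.inr (suffixRev_of_ofFn_eq hπ hτ)
  by_cases hne : π = τ
  · simp [hne]
  · exact (SimpleGraph.edist_eq_one_iff_adj.2
      ((SimpleGraph.fromRel_adj _ _ _).2 ⟨hne, Or.inr hrel⟩)).le

theorem edist_le_of_reversalReach (h : ReversalReach n (List.ofFn π) (List.ofFn τ)) :
    (prefixSuffixGraph k).edist π τ ≤ n := by
  generalize hl : List.ofFn π = l, hl' : List.ofFn τ = l' at h
  induction h generalizing π with
  | refl l =>
    obtain rfl : π = τ := DFunLike.coe_injective (List.ofFn_injective (hl.trans hl'.symm))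
    simp
  | @step n _ _ _ hstep _ ih =>
    subst hl
    obtain ⟨σ, rfl⟩ := exists_ofFn_eq_of_perm hstep.perm
    calc (prefixSuffixGraph k).edist π τ
        ≤ (prefixSuffixGraph k).edist π σ + (prefixSuffixGraph k).edist σ τ :=
          SimpleGraph.edist_triangle
      _ ≤ 1 + n := add_le_add (edist_le_one_of_reversalStep hstep) (ih rfl hl')
      _ = ↑(n + 1) := by rw [Nat.cast_succ, add_comm]

theorem ediam_prefixSuffixGraph_le {d : ℕ} (hd : 1 ≤ d) :
    (prefixSuffixGraph (2 * d)).ediam ≤ ↑(3 * d + 2) := by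
  refine SimpleGraph.ediam_le_of_edist_le fun π τ => edist_le_of_reversalReach ?_
  -- Reversals act on positions, so turning `π` into `τ` amounts to sorting `τ⁻¹ * π`.
  have sorted := reversalReach_finRange hd (List.nodup_ofFn.2 (τ⁻¹ * π).injective)
    fun x => List.mem_ofFn.2 ((τ⁻¹ * π).surjective x)
  simpa [List.map_ofFn, List.ofFn_eq_map, Function.comp_def] using sorted.map τ

end Graph

end PrefixSuffix

/-- For every even integer `k = 2d` with `d ≥ 1`, `h(k) ≤ (3/2)k + 2`. -/
theorem statement_1 (d : ℕ) (hd : 1 ≤ d) :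
    ((prefixSuffixGraph (2 * d)).diam : ℚ) ≤ 3 / 2 * ((2 * d : ℕ) : ℚ) + 2 := by
  have hdiam : (prefixSuffixGraph (2 * d)).diam ≤ 3 * d + 2 :=
    ENat.toNat_le_of_le_natCast (PrefixSuffix.ediam_prefixSuffixGraph_le hd)
  calc ((prefixSuffixGraph (2 * d)).diam : ℚ) ≤ ((3 * d + 2 : ℕ) : ℚ) := by exact_mod_cast hdiam
    _ = 3 / 2 * ((2 * d : ℕ) : ℚ) + 2 := by push_cast; ring
end

section
/- For every integer k ≥ 1, h(k) ≤ h(k+1), i.e., the diameter of G_k is at most the diameter of G_{k+1}. -/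
/-!
Deleting the largest value from a permutation of `[k + 1]` gives a surjection from the vertices of
`G_{k+1}` onto those of `G_k`. A reversal of a prefix or suffix stays one, or becomes trivial, after
the deletion, so edges are sent to edges or collapsed, and distances do not increase. As `G_{k+1}`
is connected, its diameter bounds that of `G_k`.

Deletion is compatible with composition, so only the permutations of positions
`prefixReversal` and `Fin.revPerm` have to be examined; suffix reversals are the conjugates of
prefix reversals by `Fin.revPerm`.
-/

section Contraction

variable {V W : Type*} {G : SimpleGraph V} {H : SimpleGraph W} {f : V → W}

theorem edist_map_le_of_adj (hf : ∀ u v, G.Adj u v → H.edist (f u) (f v) ≤ 1) (u v : V) :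
    H.edist (f u) (f v) ≤ G.edist u v := by
  have le_length {u v : V} (w : G.Walk u v) : H.edist (f u) (f v) ≤ w.length := by
    induction w with
    | nil => simp
    | @cons u v x huv w ih =>
      calc H.edist (f u) (f x) ≤ H.edist (f u) (f v) + H.edist (f v) (f x) := H.edist_triangle
        _ ≤ 1 + w.length := add_le_add (hf u v huv) ih
        _ = (w.cons huv).length := by rw [SimpleGraph.Walk.length_cons, Nat.cast_succ, add_comm]
  exact le_sInf (Set.forall_mem_range.2 le_length)

theorem ediam_le_of_surjective (hsurj : Function.Surjective f)
    (hf : ∀ u v, G.Adj u v → H.edist (f u) (f v) ≤ 1) : H.ediam ≤ G.ediam :=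
  SimpleGraph.ediam_le_of_edist_le <| hsurj.forall₂.2 fun u v =>
    (edist_map_le_of_adj hf u v).trans SimpleGraph.edist_le_ediam

end Contraction

section Deletion

variable {k : ℕ}

/-- The permutation of `Fin k` whose one-line notation is that of `π` with the entry at position
`p` removed and the remaining entries relabelled in order-preserving fashion. -/
def deleteAt (p : Fin (k + 1)) (π : Equiv.Perm (Fin (k + 1))) : Equiv.Perm (Fin k) :=
  (finSuccAboveEquiv p).trans <|
    (π.subtypeEquiv (q := (· ≠ π p)) fun _ => π.injective.ne_iff.symm).trans
      (finSuccAboveEquiv (π p)).symm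

theorem succAbove_deleteAt (p : Fin (k + 1)) (π : Equiv.Perm (Fin (k + 1))) (i : Fin k) :
    (π p).succAbove (deleteAt p π i) = π (p.succAbove i) :=
  congrArg Subtype.val ((finSuccAboveEquiv (π p)).apply_symm_apply _)

theorem deleteAt_eq_iff {p : Fin (k + 1)} {π : Equiv.Perm (Fin (k + 1))}
    {σ : Equiv.Perm (Fin k)} :
    deleteAt p π = σ ↔ ∀ i, (π p).succAbove (σ i) = π (p.succAbove i) := by
  simp only [Equiv.ext_iff, ← succAbove_deleteAt, Fin.succAbove_right_inj, eq_comm]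

theorem deleteAt_mul (p : Fin (k + 1)) (τ ρ : Equiv.Perm (Fin (k + 1))) :
    deleteAt p (τ * ρ) = deleteAt (ρ p) τ * deleteAt p ρ :=
  deleteAt_eq_iff.2 fun i => by
    simp only [Equiv.Perm.mul_apply, succAbove_deleteAt]

theorem deleteAt_revPerm (p : Fin (k + 1)) : deleteAt p Fin.revPerm = Fin.revPerm :=
  deleteAt_eq_iff.2 fun i => (Fin.rev_succAbove p i).symm

/-- The permutation of `Fin k` whose one-line notation is that of `π` with the value `v` removed
and the remaining entries relabelled in order-preserving fashion. -/
def deleteValue (v : Fin (k + 1)) (π : Equiv.Perm (Fin (k + 1))) : Equiv.Perm (Fin k) :=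
  deleteAt (π.symm v) π

theorem deleteValue_mul (v : Fin (k + 1)) (τ ρ : Equiv.Perm (Fin (k + 1))) :
    deleteValue v (τ * ρ) = deleteValue v τ * deleteAt ((τ * ρ).symm v) ρ := by
  have hpos : ρ ((τ * ρ).symm v) = τ.symm v := ρ.apply_symm_apply _
  rw [deleteValue, deleteAt_mul, hpos, deleteValue]

theorem deleteValue_surjective (v : Fin (k + 1)) : Function.Surjective (deleteValue v) := by
  intro σ
  let π : Equiv.Perm (Fin (k + 1)) := σ.extendDomain (finSuccAboveEquiv v)
  have hv : π v = v := σ.extendDomain_apply_not_subtype _ (by simp)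
  have hπ (i : Fin k) : π (v.succAbove i) = v.succAbove (σ i) :=
    σ.extendDomain_apply_image (finSuccAboveEquiv v) i
  refine ⟨π, ?_⟩
  rw [deleteValue, π.symm_apply_eq.2 hv.symm, deleteAt_eq_iff]
  simp only [hv, hπ, implies_true]

end Deletion

section Reversals

variable {k : ℕ}

/-- The permutation of the `k` positions that reverses the order of the first `t` of them; composing
with it on the right performs a prefix reversal. -/
def prefixReversal {t : ℕ} (ht : t ≤ k) : Equiv.Perm (Fin k) :=
  Function.Involutive.toPerm
    (fun i => if h : (i : ℕ) < t then ⟨t - 1 - i, by omega⟩ else i) fun i => by grind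

theorem val_prefixReversal {t : ℕ} (ht : t ≤ k) (i : Fin k) :
    (prefixReversal ht i : ℕ) = if (i : ℕ) < t then t - 1 - i else i :=
  apply_dite Fin.val _ _ _

theorem prefixRev_iff_exists_eq_mul {π τ : Equiv.Perm (Fin k)} :
    PrefixRev k π τ ↔ ∃ (t : ℕ) (ht : t ≤ k), π = τ * prefixReversal ht := by
  refine exists_congr fun t => exists_congr fun ht => ?_
  have apply_of_le (i : Fin k) (hi : t ≤ i) : prefixReversal ht i = i :=
    Fin.ext <| by rw [val_prefixReversal, if_neg hi.not_gt]
  have apply_of_lt (i : Fin k) (hi : (i : ℕ) < t) :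
      prefixReversal ht i = ⟨t - 1 - i, by omega⟩ :=
    Fin.ext <| by rw [val_prefixReversal, if_pos hi]
  constructor
  · rintro ⟨hfix, hrev⟩
    ext1 i
    rw [Equiv.Perm.mul_apply]
    rcases le_or_gt t i with hi | hi
    · rw [apply_of_le i hi, hfix i hi]
    · rw [apply_of_lt i hi, hrev i hi]
  · rintro rfl
    exact ⟨fun i hi => congrArg τ (apply_of_le i hi), fun i hi => congrArg τ (apply_of_lt i hi)⟩

theorem suffixRev_iff_prefixRev_mul_revPerm {π τ : Equiv.Perm (Fin k)} :
    SuffixRev k π τ ↔ PrefixRev k (π * Fin.revPerm) (τ * Fin.revPerm) := by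
  constructor
  · rintro ⟨t, hfix, hrev⟩
    refine ⟨k - t, k.sub_le t, fun i hi => hfix i.rev ?_, fun i hi => ?_⟩
    · rw [Fin.val_rev]
      omega
    · refine (hrev i.rev (by rw [Fin.val_rev]; omega)).trans (congrArg τ (Fin.ext ?_))
      simp only [Fin.revPerm_apply, Fin.val_rev]
      omega
  · rintro ⟨t, ht, hfix, hrev⟩
    have apply_eq (i : Fin k) : π i = (π * Fin.revPerm : Equiv.Perm (Fin k)) i.rev :=
      congrArg π i.rev_rev.symm
    refine ⟨k - t, fun i hi => ?_, fun i hi => ?_⟩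
    · rw [apply_eq, hfix i.rev (by rw [Fin.val_rev]; omega)]
      exact congrArg τ i.rev_rev
    · rw [apply_eq, hrev i.rev (by rw [Fin.val_rev]; omega)]
      refine congrArg τ (Fin.ext ?_)
      simp only [Fin.revPerm_apply, Fin.val_rev]
      omega

theorem exists_deleteAt_prefixReversal_eq {t : ℕ} (ht : t ≤ k + 1) (p : Fin (k + 1)) :
    ∃ (s : ℕ) (hs : s ≤ k), deleteAt p (prefixReversal ht) = prefixReversal hs := by
  have val_succAbove (q : Fin (k + 1)) (i : Fin k) :
      (q.succAbove i : ℕ) = if (i : ℕ) < q then (i : ℕ) else i + 1 := by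
    simp only [Fin.succAbove, Fin.lt_def, Fin.val_castSucc]
    split <;> rfl
  refine ⟨if (p : ℕ) < t then t - 1 else t, by split <;> omega, deleteAt_eq_iff.2 fun i => ?_⟩
  ext
  simp only [val_succAbove, val_prefixReversal]
  split_ifs <;> omega

theorem PrefixRev.deleteValue {π τ : Equiv.Perm (Fin (k + 1))} (h : PrefixRev (k + 1) π τ)
    (v : Fin (k + 1)) : PrefixRev k (deleteValue v π) (deleteValue v τ) := by
  obtain ⟨t, ht, rfl⟩ := prefixRev_iff_exists_eq_mul.1 h
  obtain ⟨s, hs, hdel⟩ := exists_deleteAt_prefixReversal_eq ht ((τ * prefixReversal ht).symm v)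
  exact prefixRev_iff_exists_eq_mul.2 ⟨s, hs, by rw [deleteValue_mul, hdel]⟩

theorem SuffixRev.deleteValue {π τ : Equiv.Perm (Fin (k + 1))} (h : SuffixRev (k + 1) π τ)
    (v : Fin (k + 1)) : SuffixRev k (deleteValue v π) (deleteValue v τ) := by
  rw [suffixRev_iff_prefixRev_mul_revPerm] at h ⊢
  simpa only [deleteValue_mul, deleteAt_revPerm] using h.deleteValue v

end Reversals

section Graphs

theorem edist_deleteValue_le_one {k : ℕ} (v : Fin (k + 1)) {π τ : Equiv.Perm (Fin (k + 1))}
    (h : (prefixSuffixGraph (k + 1)).Adj π τ) :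
    (prefixSuffixGraph k).edist (deleteValue v π) (deleteValue v τ) ≤ 1 := by
  have image_rel {σ ρ : Equiv.Perm (Fin (k + 1))}
      (h : PrefixRev (k + 1) σ ρ ∨ SuffixRev (k + 1) σ ρ) :
      PrefixRev k (deleteValue v σ) (deleteValue v ρ) ∨
        SuffixRev k (deleteValue v σ) (deleteValue v ρ) :=
    h.imp (·.deleteValue v) (·.deleteValue v)
  rw [SimpleGraph.edist_le_one_iff_adj_or_eq, or_iff_not_imp_right]
  exact fun hne => ⟨hne, h.2.imp image_rel image_rel⟩

theorem pancakeGraph_le_prefixSuffixGraph (k : ℕ) : pancakeGraph k ≤ prefixSuffixGraph k :=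
  fun _ _ h => ⟨h.1, h.2.imp Or.inl Or.inl⟩

theorem pancakeGraph_reachable_mul_prefixReversal {k t : ℕ} (ht : t ≤ k)
    (τ : Equiv.Perm (Fin k)) : (pancakeGraph k).Reachable τ (τ * prefixReversal ht) := by
  by_cases heq : τ = τ * prefixReversal ht
  · rw [← heq]
  · exact SimpleGraph.Adj.reachable
      ⟨heq, Or.inr (prefixRev_iff_exists_eq_mul.2 ⟨t, ht, rfl⟩)⟩

theorem swap_castSucc_succ_eq_prefixReversal_mul {n : ℕ} (i : Fin n) :
    Equiv.swap i.castSucc i.succ =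
      prefixReversal (t := i + 2) (by omega) * prefixReversal (t := 2) (Nat.succ_le_succ i.pos) *
        prefixReversal (t := i + 2) (by omega) := by
  ext j
  simp only [Equiv.Perm.mul_apply, val_prefixReversal, Equiv.swap_apply_def, Fin.ext_iff,
    Fin.val_castSucc, Fin.val_succ]
  grind

theorem pancakeGraph_reachable_mul {n : ℕ} (τ g : Equiv.Perm (Fin (n + 1))) :
    (pancakeGraph (n + 1)).Reachable τ (τ * g) := by
  have hg : g ∈ Submonoid.closure (Set.range fun i : Fin n => Equiv.swap i.castSucc i.succ) :=
    Equiv.Perm.mclosure_swap_castSucc_succ n ▸ Submonoid.mem_top g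
  induction hg using Submonoid.closure_induction generalizing τ with
  | mem g hg =>
    obtain ⟨i, rfl⟩ := hg
    simp only [swap_castSucc_succ_eq_prefixReversal_mul, ← mul_assoc]
    exact ((pancakeGraph_reachable_mul_prefixReversal _ _).trans
      (pancakeGraph_reachable_mul_prefixReversal _ _)).trans
        (pancakeGraph_reachable_mul_prefixReversal _ _)
  | one => rw [mul_one]
  | mul g g' _ _ hg hg' =>
    rw [← mul_assoc]
    exact (hg τ).trans (hg' _)

theorem pancakeGraph_connected (k : ℕ) : (pancakeGraph k).Connected where
  preconnected π τ := by
    cases k with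
    | zero => rw [Subsingleton.elim π τ]
    | succ n => simpa only [mul_inv_cancel_left] using pancakeGraph_reachable_mul π (π⁻¹ * τ)

theorem prefixSuffixGraph_ediam_ne_top (k : ℕ) : (prefixSuffixGraph k).ediam ≠ ⊤ :=
  SimpleGraph.connected_iff_ediam_ne_top.1 <|
    (pancakeGraph_connected k).mono (pancakeGraph_le_prefixSuffixGraph k)

end Graphs

/-- For every integer `k ≥ 1`, `h(k) ≤ h(k + 1)`: the diameter of `G_k`
is at most the diameter of `G_{k+1}`. -/
theorem statement_2 (k : ℕ) (hk : 1 ≤ k) :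
    (prefixSuffixGraph k).diam ≤ (prefixSuffixGraph (k + 1)).diam := by
  have hediam : (prefixSuffixGraph k).ediam ≤ (prefixSuffixGraph (k + 1)).ediam :=
    ediam_le_of_surjective (deleteValue_surjective (Fin.last k))
      fun _ _ => edist_deleteValue_le_one (Fin.last k)
  exact ENat.toNat_le_toNat hediam (prefixSuffixGraph_ediam_ne_top (k + 1))
end

section
/- Let k = 2d with d ≥ 1. For every π ∈ S_k there exists τ ∈ S_k such that ∼_τ has exactly one equivalence class on [k] and d_{G_k}(π, τ) ≤ (3/2)·k − 2. -/
/-!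
Call the values `j` and `partner d j` mates and the values `j` and `prevVal d j` neighbors; mates
and neighbors together form the cycle of all `2 * d` values. Cut the current arrangement into single
entries and *blocks*, stretches of the cycle made of whole pairs of mates, and give it the potential
`2ν`: `3` per single entry and `4` per block. If the arrangement starts with a single entry, its
mate is also single and one reversal joins them, `3 + 3 → 4`. If it starts with a block, let `y` be
the neighbor of the first entry. If `y` lies in this block, the block is the whole cycle. If `y`
lies in another block, it is an end of that block and at most two reversals join the two blocks,
`4 + 4 → 4`. If `y` is single, then so is its mate, and three reversals join all three pieces,
`4 + 3 + 3 → 4`. Each reversal thus lowers the potential by at least `2` on average, from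
`3 * (2 * d)` to at least `4`, which leaves room for at most `3 * d - 2` of them.
-/

section Reversals

variable {α : Type*} {l₁ l₂ l₃ : List α} {m n : ℕ}

/-- A single reversal of a prefix or of a suffix of a list. -/
inductive ReversalStep : List α → List α → Prop
  | reversePrefix (A B : List α) : ReversalStep (A ++ B) (A.reverse ++ B)
  | reverseSuffix (A B : List α) : ReversalStep (A ++ B) (A ++ B.reverse)

/-- `ReversalReach n l l'`: the list `l` is turned into `l'` by exactly `n` prefix or suffix
reversals, which may be trivial. -/
inductive ReversalReach : ℕ → List α → List α → Prop
  | refl (l : List α) : ReversalReach 0 l l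
  | head {n : ℕ} {l₁ l₂ l₃ : List α} :
      ReversalStep l₁ l₂ → ReversalReach n l₂ l₃ → ReversalReach (n + 1) l₁ l₃

theorem ReversalStep.perm (h : ReversalStep l₁ l₂) : l₁.Perm l₂ := by
  cases h with
  | reversePrefix A B => exact (List.reverse_perm A).symm.append_right B
  | reverseSuffix A B => exact (List.reverse_perm B).symm.append_left A

theorem ReversalStep.reach (h : ReversalStep l₁ l₂) : ReversalReach 1 l₁ l₂ :=
  .head h (.refl l₂)

theorem ReversalReach.perm (h : ReversalReach n l₁ l₂) : l₁.Perm l₂ := by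
  induction h with
  | refl l => exact .refl l
  | head hstep _ ih => exact hstep.perm.trans ih

theorem ReversalReach.trans (h₁ : ReversalReach m l₁ l₂) (h₂ : ReversalReach n l₂ l₃) :
    ReversalReach (m + n) l₁ l₃ := by
  induction h₁ with
  | refl l => rwa [zero_add]
  | head hstep _ ih => rw [Nat.succ_add]; exact .head hstep (ih h₂)

theorem reversalReach_moveToFront (A Q B : List α) :
    ReversalReach 2 (A ++ Q ++ B) (Q.reverse ++ A ++ B) := by
  have flip_front := ReversalStep.reversePrefix A (Q ++ B)
  rw [← List.append_assoc, ← List.append_assoc] at flip_front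
  have bring_to_front := ReversalStep.reversePrefix (A.reverse ++ Q) B
  rw [List.reverse_append, List.reverse_reverse] at bring_to_front
  exact .head flip_front bring_to_front.reach

end Reversals

section Blocks

variable {α : Type*} {φ ψ : α → α} {x y w v : α} {l l₁ l₂ : List α}

variable (φ ψ) in
/-- `IsBlock φ ψ x w l`: the list `l` has first entry `x`, last entry `w` and even length, and its
successive entries are obtained by applying `φ, ψ, φ, …, ψ, φ`: the inner map `φ` makes up the pairs
and the outer map `ψ` links one pair to the next. These are the blocks of the paper when `φ` and `ψ`
are `partner` and `prevVal`. -/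
inductive IsBlock : α → α → List α → Prop
  | pair (a : α) : IsBlock a (φ a) [a, φ a]
  | cons {a w : α} {l : List α} : IsBlock (ψ (φ a)) w l → IsBlock a w (a :: φ a :: l)

namespace IsBlock

theorem append (h₁ : IsBlock φ ψ x w l₁) (h₂ : IsBlock φ ψ (ψ w) v l₂) :
    IsBlock φ ψ x v (l₁ ++ l₂) := by
  induction h₁ with
  | pair a => exact .cons h₂
  | cons _ ih => exact .cons (ih h₂)

theorem pair_swap (hφ : Function.Involutive φ) (a : α) : IsBlock φ ψ (φ a) a [φ a, a] := by
  simpa only [hφ a] using IsBlock.pair (φ := φ) (ψ := ψ) (φ a)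

theorem reverse (hφ : Function.Involutive φ) (hψ : Function.Involutive ψ)
    (h : IsBlock φ ψ x w l) : IsBlock φ ψ w x l.reverse := by
  induction h with
  | pair a => exact pair_swap hφ a
  | @cons a w l _ ih =>
    have last_pair : IsBlock φ ψ (ψ (ψ (φ a))) a [φ a, a] := by
      rw [hψ]
      exact pair_swap hφ a
    simpa using ih.append last_pair

theorem length_ne_one (h : IsBlock φ ψ x w l) : l.length ≠ 1 := by
  cases h <;> simp

theorem isChain (h : IsBlock φ ψ x w l) : l.IsChain (fun a b => b = φ a ∨ b = ψ a) := by
  induction h with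
  | pair a => simp
  | cons h ih =>
    cases h with
    | pair => simp
    | cons _ => simpa using ih

theorem map_inner_mem (hφ : Function.Involutive φ) (h : IsBlock φ ψ x w l) :
    ∀ y ∈ l, φ y ∈ l := by
  induction h with
  | pair a => simp [hφ a]
  | @cons a w l _ ih =>
    intro y hy
    simp only [List.mem_cons] at hy ⊢
    rcases hy with rfl | rfl | hy
    · exact .inr (.inl rfl)
    · exact .inl (hφ a)
    · exact .inr (.inr (ih y hy))

theorem exists_eq_cons_append (hψ : Function.Involutive ψ) (h : IsBlock φ ψ x w l) :
    ∃ m, l = x :: (m ++ [w]) ∧ ∀ y ∈ m, ψ y ∈ m := by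
  induction h with
  | pair a => exact ⟨[], by simp⟩
  | @cons a w l _ ih =>
    obtain ⟨m, rfl, hm⟩ := ih
    refine ⟨φ a :: ψ (φ a) :: m, by simp, fun y hy => ?_⟩
    simp only [List.mem_cons] at hy ⊢
    rcases hy with rfl | rfl | hy
    · exact .inr (.inl rfl)
    · exact .inl (hψ (φ a))
    · exact .inr (.inr (hm y hy))

theorem first_mem (h : IsBlock φ ψ x w l) : x ∈ l := by
  cases h <;> simp

theorem eq_first_or_eq_last (hψ : Function.Involutive ψ) (h : IsBlock φ ψ x w l)
    (hy : y ∈ l) (hψy : ψ y ∉ l) : y = x ∨ y = w := by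
  obtain ⟨m, rfl, hm⟩ := h.exists_eq_cons_append hψ
  simp only [List.mem_cons, List.mem_append, List.not_mem_nil, or_false] at hy hψy
  have := hm y
  tauto

theorem map_outer_mem (hψ : Function.Involutive ψ) (hψx : ψ x ≠ x) (hl : l.Nodup)
    (h : IsBlock φ ψ x w l) (hx : ψ x ∈ l) : ∀ y ∈ l, ψ y ∈ l := by
  obtain ⟨m, rfl, hm⟩ := h.exists_eq_cons_append hψ
  have x_notMem : x ∉ m := fun hxm => (List.nodup_cons.1 hl).1 (List.mem_append_left _ hxm)
  simp only [List.mem_cons, List.mem_append, List.not_mem_nil, or_false] at hx ⊢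
  have last_eq : ψ x = w := by
    rcases hx with h | h | h
    · exact absurd h hψx
    · exact absurd (hψ x ▸ hm _ h) x_notMem
    · exact h
  rintro y (rfl | hy | rfl)
  · exact .inr (.inr last_eq)
  · exact .inr (.inl (hm y hy))
  · exact .inl (last_eq ▸ hψ x)

end IsBlock

variable (φ ψ) in
/-- A piece of an arrangement: a single entry or a block. -/
def IsPiece (q : List α) : Prop := (∃ a, q = [a]) ∨ ∃ x w, IsBlock φ ψ x w q

theorem IsPiece.reverse (hφ : Function.Involutive φ) (hψ : Function.Involutive ψ)
    (h : IsPiece φ ψ l) : IsPiece φ ψ l.reverse := by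
  rcases h with ⟨a, rfl⟩ | ⟨x, w, hb⟩
  · exact .inl ⟨a, rfl⟩
  · exact .inr ⟨w, x, hb.reverse hφ hψ⟩

/-- The reversal of an arrangement that is cut into pieces: the pieces come in reverse order and
each of them is reversed. -/
def reversePieces (L : List (List α)) : List (List α) := (L.map List.reverse).reverse

theorem flatten_reversePieces (L : List (List α)) :
    (reversePieces L).flatten = L.flatten.reverse :=
  List.reverse_flatten.symm

theorem forall_isPiece_reversePieces (hφ : Function.Involutive φ) (hψ : Function.Involutive ψ)
    {L : List (List α)} (h : ∀ q ∈ L, IsPiece φ ψ q) : ∀ q ∈ reversePieces L, IsPiece φ ψ q := by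
  intro q hq
  obtain ⟨r, hr, rfl⟩ := List.mem_map.1 (List.mem_reverse.1 hq)
  exact (h r hr).reverse hφ hψ

/-- The contribution of a piece to the potential. It is twice the contribution to `ν` in the paper,
so that it is an integer: `3` for a single entry and `4` for a block. -/
def pieceWeight (q : List α) : ℕ := if q.length = 1 then 3 else 4

/-- The total weight of the pieces of an arrangement, twice the potential `ν` of the paper. -/
def potential (L : List (List α)) : ℕ := (L.map pieceWeight).sum

theorem pieceWeight_singleton (a : α) : pieceWeight [a] = 3 := rfl

theorem IsBlock.pieceWeight_eq (h : IsBlock φ ψ x w l) : pieceWeight l = 4 :=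
  if_neg h.length_ne_one

theorem potential_cons (q : List α) (L : List (List α)) :
    potential (q :: L) = pieceWeight q + potential L := by
  simp [potential]

theorem potential_append (L M : List (List α)) :
    potential (L ++ M) = potential L + potential M := by
  simp [potential]

theorem potential_reversePieces (L : List (List α)) :
    potential (reversePieces L) = potential L := by
  have weight_reverse : pieceWeight ∘ List.reverse = (pieceWeight : List α → ℕ) := by
    ext q
    simp [pieceWeight]
  simp [potential, reversePieces, List.sum_reverse, weight_reverse]

theorem potential_map_singleton (l : List α) : potential (l.map ([·])) = 3 * l.length := by
  induction l with
  | nil => rfl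
  | cons a l ih =>
    rw [List.map_cons, potential_cons, ih, pieceWeight_singleton, List.length_cons]
    ring

variable (φ ψ) in
/-- `L` cuts an arrangement of all elements of `α` into pieces. -/
structure IsPieceDecomposition (L : List (List α)) : Prop where
  isPiece : ∀ q ∈ L, IsPiece φ ψ q
  nodup : L.flatten.Nodup
  mem_flatten : ∀ a, a ∈ L.flatten

theorem isPieceDecomposition_map_singleton (hl : l.Nodup) (hmem : ∀ a, a ∈ l) :
    IsPieceDecomposition φ ψ (l.map ([·])) where
  isPiece q hq := by
    obtain ⟨a, -, rfl⟩ := List.mem_map.1 hq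
    exact .inl ⟨a, rfl⟩
  nodup := by simpa [← List.flatMap_def] using hl
  mem_flatten := by simpa [← List.flatMap_def] using hmem

namespace IsPieceDecomposition

variable {L : List (List α)} {q q' : List α} {a : α}

theorem eq_of_mem_of_mem (hL : IsPieceDecomposition φ ψ L) (hq : q ∈ L) (hq' : q' ∈ L)
    (ha : a ∈ q) (ha' : a ∈ q') : q = q' := by
  by_contra hne
  have pairwise_disjoint := (List.nodup_flatten.1 hL.nodup).2
  have : Std.Symm (List.Disjoint (α := α)) := ⟨fun _ _ h => h.symm⟩
  exact pairwise_disjoint.forall hq hq' hne ha ha'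

theorem singleton_map_inner_mem (hφ : Function.Involutive φ) (hL : IsPieceDecomposition φ ψ L)
    (ha : [a] ∈ L) : [φ a] ∈ L := by
  obtain ⟨q, hq, hφa⟩ := List.mem_flatten.1 (hL.mem_flatten (φ a))
  rcases hL.isPiece q hq with ⟨c, rfl⟩ | ⟨x, w, hb⟩
  · rwa [List.mem_singleton.1 hφa]
  · have a_mem : a ∈ q := hφ a ▸ hb.map_inner_mem hφ _ hφa
    have q_eq : q = [a] := hL.eq_of_mem_of_mem hq ha a_mem (List.mem_singleton_self a)
    exact absurd (congrArg List.length q_eq) hb.length_ne_one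

theorem of_reversalReach {n : ℕ} {L' : List (List α)} (hL : IsPieceDecomposition φ ψ L)
    (hreach : ReversalReach n L.flatten L'.flatten) (hpieces : ∀ q ∈ L', IsPiece φ ψ q) :
    IsPieceDecomposition φ ψ L' where
  isPiece := hpieces
  nodup := hreach.perm.nodup_iff.1 hL.nodup
  mem_flatten a := hreach.perm.mem_iff.1 (hL.mem_flatten a)

end IsPieceDecomposition

end Blocks

section Sorting

variable {α : Type*} {φ ψ : α → α} {x y w v a : α} {L A B T : List (List α)} {b q : List α}

variable (φ ψ) in
/-- A positive number of reversals, each of which lowers the potential by at least `2` on average,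
leads from the arrangement cut as `L` to another one that is cut into pieces. -/
def Improvable (L : List (List α)) : Prop :=
  ∃ n L', ReversalReach (n + 1) L.flatten L'.flatten ∧ (∀ q ∈ L', IsPiece φ ψ q) ∧
    potential L' + 2 * (n + 1) ≤ potential L

theorem improvable_of_merge (hφ : Function.Involutive φ) (hψ : Function.Involutive ψ) {n : ℕ}
    (hreach : ReversalReach n L.flatten (b ++ (A ++ q :: B).flatten))
    (hmerged : IsBlock φ ψ x w (b.reverse ++ q)) (hA : ∀ r ∈ A, IsPiece φ ψ r)
    (hB : ∀ r ∈ B, IsPiece φ ψ r)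
    (hpot : potential A + potential B + 4 + 2 * (n + 1) ≤ potential L) :
    Improvable φ ψ L := by
  refine ⟨n, reversePieces A ++ (b.reverse ++ q) :: B, hreach.trans ?_, fun r hr => ?_, ?_⟩
  · have merge_step := ReversalStep.reversePrefix (b ++ A.flatten) (q ++ B.flatten)
    simpa [flatten_reversePieces] using merge_step.reach
  · rcases List.mem_append.1 hr with hr | hr
    · exact forall_isPiece_reversePieces hφ hψ hA r hr
    · rcases List.mem_cons.1 hr with rfl | hr
      · exact .inr ⟨x, w, hmerged⟩
      · exact hB r hr
  · rw [potential_append, potential_cons, potential_reversePieces, hmerged.pieceWeight_eq]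
    omega

theorem improvable_of_singleton_head (hφ : Function.Involutive φ) (hφ_ne : ∀ a, φ a ≠ a)
    (hψ : Function.Involutive ψ) (hL : IsPieceDecomposition φ ψ ([a] :: T)) :
    Improvable φ ψ ([a] :: T) := by
  have mate_mem : [φ a] ∈ T := by
    simpa [hφ_ne a] using hL.singleton_map_inner_mem hφ (List.mem_cons_self (a := [a]))
  obtain ⟨A, B, rfl⟩ := List.append_of_mem mate_mem
  refine improvable_of_merge hφ hψ (.refl _) (.pair a) (fun r hr => hL.isPiece r (by simp [hr]))
    (fun r hr => hL.isPiece r (by simp [hr])) ?_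
  simp only [potential_cons, potential_append, pieceWeight_singleton]
  omega

theorem improvable_of_singleton_neighbor (hφ : Function.Involutive φ) (hφ_ne : ∀ a, φ a ≠ a)
    (hψ : Function.Involutive ψ) (hL : IsPieceDecomposition φ ψ (b :: (A ++ [ψ x] :: B)))
    (hb : IsBlock φ ψ x w b) : Improvable φ ψ (b :: (A ++ [ψ x] :: B)) := by
  have mate_mem : [φ (ψ x)] ∈ A ++ B := by
    have mate_ne : [φ (ψ x)] ≠ b := fun h => hb.length_ne_one (h ▸ rfl)
    have := hL.singleton_map_inner_mem hφ (a := ψ x) (by simp)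
    simpa [mate_ne, hφ_ne (ψ x)] using this
  obtain ⟨C, D, hCD⟩ := List.append_of_mem mate_mem
  have isPiece_CD (r) (hr : r ∈ C ++ [φ (ψ x)] :: D) : IsPiece φ ψ r := by
    rw [← hCD] at hr
    exact hL.isPiece r (by simp only [List.mem_cons, List.mem_append] at hr ⊢; tauto)
  have hreach : ReversalReach 2 (b :: (A ++ [ψ x] :: B)).flatten
      (ψ x :: b ++ (C ++ [φ (ψ x)] :: D).flatten) := by
    simpa [← hCD] using reversalReach_moveToFront (b ++ A.flatten) [ψ x] B.flatten
  have hmerged : IsBlock φ ψ w (φ (ψ x)) ((ψ x :: b).reverse ++ [φ (ψ x)]) := by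
    simpa using (hb.reverse hφ hψ).append (.pair (ψ x))
  refine improvable_of_merge hφ hψ hreach hmerged (fun r hr => isPiece_CD r (by simp [hr]))
    (fun r hr => isPiece_CD r (by simp [hr])) ?_
  have hpot := congrArg potential hCD
  simp only [potential_cons, potential_append, pieceWeight_singleton, hb.pieceWeight_eq] at hpot ⊢
  omega

theorem improvable_of_block_neighbor (hφ : Function.Involutive φ) (hψ : Function.Involutive ψ)
    (hL : IsPieceDecomposition φ ψ (b :: (A ++ q :: B))) (hb : IsBlock φ ψ x w b)
    (hq : IsBlock φ ψ y v q) (hx : ψ x ∈ q) : Improvable φ ψ (b :: (A ++ q :: B)) := by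
  have hA (r) (hr : r ∈ A) : IsPiece φ ψ r := hL.isPiece r (by simp [hr])
  have hB (r) (hr : r ∈ B) : IsPiece φ ψ r := hL.isPiece r (by simp [hr])
  have x_notMem : ψ (ψ x) ∉ q := by
    rw [hψ]
    exact fun hxq => List.disjoint_of_nodup_append hL.nodup hb.first_mem (by simp [hxq])
  rcases hq.eq_first_or_eq_last hψ hx x_notMem with rfl | rfl
  · refine improvable_of_merge hφ hψ (.refl _) ((hb.reverse hφ hψ).append hq) hA hB ?_
    simp only [potential_cons, potential_append, hb.pieceWeight_eq, hq.pieceWeight_eq]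
    omega
  · have hreach : ReversalReach 1 (b :: (A ++ q :: B)).flatten
        (b ++ (A ++ reversePieces B ++ q.reverse :: []).flatten) := by
      have turn_q := ReversalStep.reverseSuffix (b ++ A.flatten) (q ++ B.flatten)
      simpa [flatten_reversePieces] using turn_q.reach
    have hAB (r) (hr : r ∈ A ++ reversePieces B) : IsPiece φ ψ r :=
      (List.mem_append.1 hr).elim (hA r) (forall_isPiece_reversePieces hφ hψ hB r)
    refine improvable_of_merge hφ hψ hreach ((hb.reverse hφ hψ).append (hq.reverse hφ hψ)) hAB
      (by simp) ?_
    simp only [potential_cons, potential_append, potential_reversePieces, hb.pieceWeight_eq,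
      hq.pieceWeight_eq, show potential ([] : List (List α)) = 0 from rfl]
    omega

variable (φ ψ) in
/-- `φ` and `ψ` are fixed-point-free involutions generating a transitive action, so that the edges
`{a, φ a}` and `{a, ψ a}` alternate along one cycle through all of `α`. -/
structure IsAlternatingCycle : Prop where
  inner_involutive : Function.Involutive φ
  inner_ne_self : ∀ a, φ a ≠ a
  outer_involutive : Function.Involutive ψ
  outer_ne_self : ∀ a, ψ a ≠ a
  eq_univ : ∀ s : Set α, s.Nonempty → Set.MapsTo φ s s → Set.MapsTo ψ s s → s = Set.univ

theorem IsAlternatingCycle.flatten_tail_eq_nil (hc : IsAlternatingCycle φ ψ)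
    (hL : IsPieceDecomposition φ ψ (b :: T)) (hb : IsBlock φ ψ x w b) (hx : ψ x ∈ b) :
    T.flatten = [] := by
  have hnodup : (b ++ T.flatten).Nodup := hL.nodup
  have b_eq_univ : {y | y ∈ b} = Set.univ :=
    hc.eq_univ _ ⟨x, hb.first_mem⟩ (hb.map_inner_mem hc.inner_involutive)
      (hb.map_outer_mem hc.outer_involutive (hc.outer_ne_self x) hnodup.of_append_left hx)
  exact List.eq_nil_iff_forall_not_mem.2 fun y hy =>
    List.disjoint_of_nodup_append hnodup (Set.eq_univ_iff_forall.1 b_eq_univ y) hy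

theorem IsAlternatingCycle.isBlock_or_improvable [Nonempty α] (hc : IsAlternatingCycle φ ψ)
    (hL : IsPieceDecomposition φ ψ L) :
    (∃ x w, IsBlock φ ψ x w L.flatten ∧ 4 ≤ potential L) ∨ Improvable φ ψ L := by
  have hφ := hc.inner_involutive
  have hψ := hc.outer_involutive
  cases L with
  | nil => exact absurd (hL.mem_flatten (Classical.arbitrary α)) List.not_mem_nil
  | cons b T =>
    rcases hL.isPiece b List.mem_cons_self with ⟨a, rfl⟩ | ⟨x, w, hb⟩
    · exact .inr (improvable_of_singleton_head hφ hc.inner_ne_self hψ hL)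
    obtain ⟨q, hq, hx⟩ := List.mem_flatten.1 (hL.mem_flatten (ψ x))
    rcases List.mem_cons.1 hq with rfl | hqT
    · refine .inl ⟨x, w, ?_, ?_⟩
      · rwa [List.flatten_cons, hc.flatten_tail_eq_nil hL hb hx, List.append_nil]
      · rw [potential_cons, hb.pieceWeight_eq]
        exact Nat.le_add_right 4 _
    · obtain ⟨A, B, rfl⟩ := List.append_of_mem hqT
      rcases hL.isPiece q hq with ⟨c, rfl⟩ | ⟨y, v, hqb⟩
      · obtain rfl := List.mem_singleton.1 hx
        exact .inr (improvable_of_singleton_neighbor hφ hc.inner_ne_self hψ hL hb)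
      · exact .inr (improvable_of_block_neighbor hφ hψ hL hb hqb hx)

theorem IsAlternatingCycle.exists_isBlock_of_isPieceDecomposition [Nonempty α]
    (hc : IsAlternatingCycle φ ψ) (hL : IsPieceDecomposition φ ψ L) :
    ∃ n l x w, ReversalReach n L.flatten l ∧ IsBlock φ ψ x w l ∧ 2 * n + 4 ≤ potential L := by
  induction hN : potential L using Nat.strong_induction_on generalizing L with
  | _ N ih =>
    rcases hc.isBlock_or_improvable hL with ⟨x, w, hb, hpot⟩ | ⟨n, L', hreach, hpieces, hpot⟩
    · exact ⟨0, _, x, w, .refl _, hb, by omega⟩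
    · obtain ⟨m, l, x, w, hreach', hb, hpot'⟩ :=
        ih _ (by omega) (hL.of_reversalReach hreach hpieces) rfl
      exact ⟨n + 1 + m, l, x, w, hreach.trans hreach', hb, by omega⟩

theorem IsAlternatingCycle.exists_isBlock [Nonempty α] (hc : IsAlternatingCycle φ ψ) {l : List α}
    (hl : l.Nodup) (hmem : ∀ a, a ∈ l) :
    ∃ n l' x w, ReversalReach n l l' ∧ IsBlock φ ψ x w l' ∧ 2 * n + 4 ≤ 3 * l.length := by
  have flatten_eq : (l.map ([·])).flatten = l := by simp [← List.flatMap_def]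
  have := hc.exists_isBlock_of_isPieceDecomposition (isPieceDecomposition_map_singleton hl hmem)
  rwa [flatten_eq, potential_map_singleton] at this

end Sorting

section PrefixSuffixGraph

variable {k : ℕ} {π σ : Equiv.Perm (Fin k)} {A B l l' : List (Fin k)}

theorem exists_perm_ofFn_eq (hlength : l.length = k) (hl : l.Nodup) :
    ∃ τ : Equiv.Perm (Fin k), List.ofFn τ = l := by
  have injective : Function.Injective fun i : Fin k => l[(i : ℕ)] := fun i j hij =>
    Fin.ext (hl.getElem_inj_iff.1 hij)
  exact ⟨.ofBijective _ (Finite.injective_iff_bijective.1 injective),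
    List.ext_getElem (by simp [hlength]) (by simp)⟩

theorem apply_eq_getElem_of_ofFn_eq (h : List.ofFn π = l) (i : Fin k) :
    π i = l[(i : ℕ)]'(by simp [← h]) := by
  subst h
  simp

theorem prefixRev_of_ofFn_eq (hπ : List.ofFn π = A ++ B) (hσ : List.ofFn σ = A.reverse ++ B) :
    PrefixRev k π σ := by
  have hk : k = A.length + B.length := by simpa using congrArg List.length hπ
  refine ⟨A.length, by omega, fun i hi => ?_, fun i hi => ?_⟩
  · rw [apply_eq_getElem_of_ofFn_eq hπ, apply_eq_getElem_of_ofFn_eq hσ,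
      List.getElem_append_right hi, List.getElem_append_right (by simpa using hi)]
    simp only [List.length_reverse]
  · rw [apply_eq_getElem_of_ofFn_eq hπ, apply_eq_getElem_of_ofFn_eq hσ,
      List.getElem_append_left hi, List.getElem_append_left (by simp; omega),
      List.getElem_reverse]
    congr 1
    dsimp only
    omega

theorem suffixRev_of_ofFn_eq (hπ : List.ofFn π = A ++ B) (hσ : List.ofFn σ = A ++ B.reverse) :
    SuffixRev k π σ := by
  have hk : k = A.length + B.length := by simpa using congrArg List.length hπ
  refine ⟨A.length, fun i hi => ?_, fun i hi => ?_⟩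
  · rw [apply_eq_getElem_of_ofFn_eq hπ, apply_eq_getElem_of_ofFn_eq hσ,
      List.getElem_append_left hi, List.getElem_append_left hi]
  · rw [apply_eq_getElem_of_ofFn_eq hπ, apply_eq_getElem_of_ofFn_eq hσ,
      List.getElem_append_right hi, List.getElem_append_right (by simp), List.getElem_reverse]
    congr 1
    dsimp only
    omega

theorem ReversalStep.prefixRev_or_suffixRev (h : ReversalStep l l') (hπ : List.ofFn π = l)
    (hσ : List.ofFn σ = l') : PrefixRev k π σ ∨ SuffixRev k π σ := by
  cases h with
  | reversePrefix A B => exact .inl (prefixRev_of_ofFn_eq hπ hσ)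
  | reverseSuffix A B => exact .inr (suffixRev_of_ofFn_eq hπ hσ)

theorem edist_prefixSuffixGraph_le_one (h : PrefixRev k π σ ∨ SuffixRev k π σ) :
    (prefixSuffixGraph k).edist π σ ≤ 1 := by
  by_cases hne : π = σ
  · simp [hne]
  · have adj : (prefixSuffixGraph k).Adj π σ := (SimpleGraph.fromRel_adj _ _ _).2 ⟨hne, .inl h⟩
    exact (SimpleGraph.edist_eq_one_iff_adj.2 adj).le

theorem ReversalReach.exists_perm_edist_le {n : ℕ} (h : ReversalReach n l l') :
    ∀ π : Equiv.Perm (Fin k), List.ofFn π = l →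
      ∃ τ : Equiv.Perm (Fin k), List.ofFn τ = l' ∧ (prefixSuffixGraph k).edist π τ ≤ n := by
  induction h with
  | refl l => exact fun π hπ => ⟨π, hπ, by simp⟩
  | @head n l₁ l₂ l₃ hstep _ ih =>
    intro π hπ
    obtain ⟨σ, hσ⟩ : ∃ σ : Equiv.Perm (Fin k), List.ofFn σ = l₂ :=
      exists_perm_ofFn_eq (by simp [← hstep.perm.length_eq, ← hπ])
        (hstep.perm.nodup_iff.1 (hπ ▸ List.nodup_ofFn.2 π.injective))
    obtain ⟨τ, hτ, hdist⟩ := ih σ hσ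
    refine ⟨τ, hτ, ?_⟩
    calc (prefixSuffixGraph k).edist π τ
        ≤ (prefixSuffixGraph k).edist π σ + (prefixSuffixGraph k).edist σ τ :=
          SimpleGraph.edist_triangle
      _ ≤ 1 + n :=
          add_le_add (edist_prefixSuffixGraph_le_one (hstep.prefixRev_or_suffixRev hπ hσ)) hdist
      _ = (n + 1 : ℕ) := by rw [add_comm, Nat.cast_succ]

end PrefixSuffixGraph

section PartnerPrevVal

variable {d : ℕ}

theorem val_partner (j : Fin (2 * d)) :
    (partner d j : ℕ) = if (j : ℕ) % 2 = 0 then (j : ℕ) + 1 else (j : ℕ) - 1 := rfl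

theorem val_prevVal (j : Fin (2 * d)) :
    (prevVal d j : ℕ) =
      if (j : ℕ) = 0 then 2 * d - 1 else if (j : ℕ) = 2 * d - 1 then 0
      else if (j : ℕ) % 2 = 0 then (j : ℕ) - 1 else (j : ℕ) + 1 := by
  have := j.isLt
  dsimp only [prevVal]
  split_ifs with even first last first last
  · rw [first, zero_add, Nat.mod_eq_of_lt (by omega)]
  · omega
  · rw [show (j : ℕ) + 2 * d - 1 = j - 1 + 2 * d by omega, Nat.add_mod_right,
      Nat.mod_eq_of_lt (by omega)]
  · omega
  · rw [last, Nat.sub_add_cancel (by omega), Nat.mod_self]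
  · exact Nat.mod_eq_of_lt (by omega)

theorem partner_involutive : Function.Involutive (partner d) := by
  intro j
  ext
  rw [val_partner, val_partner]
  split_ifs <;> omega

theorem partner_ne_self (j : Fin (2 * d)) : partner d j ≠ j := by
  rw [Ne, Fin.ext_iff, val_partner]
  split_ifs <;> omega

theorem prevVal_involutive : Function.Involutive (prevVal d) := by
  intro j
  ext
  have once := val_prevVal j
  have twice := val_prevVal (prevVal d j)
  split_ifs at once <;> split_ifs at twice <;> omega

theorem prevVal_ne_self (j : Fin (2 * d)) : prevVal d j ≠ j := by
  rw [Ne, Fin.ext_iff, val_prevVal]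
  split_ifs <;> omega

theorem mem_of_mapsTo_of_le {s : Set (Fin (2 * d))} (hpartner : Set.MapsTo (partner d) s s)
    (hprevVal : Set.MapsTo (prevVal d) s s) {y z : Fin (2 * d)} (hy : y ∈ s) (hyz : y ≤ z) :
    z ∈ s := by
  obtain ⟨z, hz⟩ := z
  induction z, (show (y : ℕ) ≤ z from hyz) using Nat.le_induction with
  | base => exact hy
  | succ n hn ih =>
    have n_mem : ⟨n, by omega⟩ ∈ s := ih _ hn
    rcases Nat.mod_two_eq_zero_or_one n with even | odd
    · convert hpartner n_mem using 1
      ext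
      simp [val_partner, even]
    · convert hprevVal n_mem using 1
      ext
      rw [val_prevVal]
      dsimp only
      split_ifs <;> omega

theorem isAlternatingCycle_partner_prevVal : IsAlternatingCycle (partner d) (prevVal d) where
  inner_involutive := partner_involutive
  inner_ne_self := partner_ne_self
  outer_involutive := prevVal_involutive
  outer_ne_self := prevVal_ne_self
  eq_univ := by
    rintro s ⟨x, hx⟩ hpartner hprevVal
    have hpos : 0 < 2 * d := x.pos
    have last_mem : ⟨2 * d - 1, by omega⟩ ∈ s :=
      mem_of_mapsTo_of_le hpartner hprevVal hx (Nat.le_sub_one_of_lt x.isLt)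
    have zero_mem : ⟨0, hpos⟩ ∈ s := by
      convert hprevVal last_mem using 1
      ext
      rw [val_prevVal]
      dsimp only
      split_ifs <;> omega
    exact Set.eq_univ_of_forall fun y =>
      mem_of_mapsTo_of_le hpartner hprevVal zero_mem (Nat.zero_le y)

variable {τ : Equiv.Perm (Fin (2 * d))} {p q : Fin (2 * d)}

theorem piAdjacency_of_eq_partner (h : τ q = partner d (τ p)) : PiAdjacency (2 * d) τ p q := by
  rw [PiAdjacency, h, val_partner]
  left
  split_ifs <;> omega

theorem piAdjacency_of_eq_prevVal (h : τ q = prevVal d (τ p)) : PiAdjacency (2 * d) τ p q := by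
  rw [PiAdjacency, h, val_prevVal]
  split_ifs with first last
  · exact .inr (by rw [first])
  · exact .inr (by rw [last, Set.pair_comm])
  · left; omega
  · left; omega

theorem oneClass_of_isBlock {x w : Fin (2 * d)}
    (h : IsBlock (partner d) (prevVal d) x w (List.ofFn τ)) : OneClass (2 * d) τ := by
  intro a b i _ hi
  have hi' : i + 1 < 2 * d := by omega
  have consecutive := List.isChain_iff_getElem.1 h.isChain i (by simpa using hi')
  simp only [List.getElem_ofFn] at consecutive
  exact ⟨hi', consecutive.elim piAdjacency_of_eq_partner piAdjacency_of_eq_prevVal⟩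

end PartnerPrevVal

/-- Let `k = 2d` with `d ≥ 1`. For every `π ∈ S_k` there exists
`τ ∈ S_k` such that `∼_τ` has exactly one equivalence class and
`d_{G_k}(π, τ) ≤ (3/2)k - 2`. -/
theorem statement_4 (d : ℕ) (hd : 1 ≤ d) (π : Equiv.Perm (Fin (2 * d))) :
    ∃ τ : Equiv.Perm (Fin (2 * d)), OneClass (2 * d) τ ∧
      (((prefixSuffixGraph (2 * d)).dist π τ : ℚ) ≤ 3 / 2 * ((2 * d : ℕ) : ℚ) - 2) := by
  have : Nonempty (Fin (2 * d)) := ⟨⟨0, by omega⟩⟩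
  obtain ⟨n, l, x, w, hreach, hblock, hn⟩ :=
    isAlternatingCycle_partner_prevVal.exists_isBlock (List.nodup_ofFn.2 π.injective)
      (fun a => List.mem_ofFn.2 (π.surjective a))
  obtain ⟨τ, rfl, hdist⟩ := hreach.exists_perm_edist_le π rfl
  refine ⟨τ, oneClass_of_isBlock hblock, ?_⟩
  have dist_le : (prefixSuffixGraph (2 * d)).dist π τ ≤ n := ENat.toNat_le_of_le_natCast hdist
  have dist_add_two_le : (prefixSuffixGraph (2 * d)).dist π τ + 2 ≤ 3 * d := by
    rw [List.length_ofFn] at hn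
    omega
  have : ((prefixSuffixGraph (2 * d)).dist π τ : ℚ) + 2 ≤ 3 * d := mod_cast dist_add_two_le
  push_cast
  linarith
end
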